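/- For every nonnegative integer n, there exists an RDSQS(3·13^n + 1), i.e., a Steiner quadruple system SQS(3·13^n + 1) whose derived design at every point is resolvable. -/

import Mathlib

open Finset

/-- A parallel class on point set `Y`: a collection of blocks that partitions `Y`. -/
def IsParallelClass (Y : Finset ℕ) (P : Finset (Finset ℕ)) : Prop :=
  (∀ b ∈ P, b ⊆ Y) ∧ ∀ y ∈ Y, ∃! b, b ∈ P ∧ y ∈ b

/-- A block collection `B` on point set `Y` is resolvable if it can be partitioned
into parallel classes of `Y`. -/
def Resolvable (Y : Finset ℕ) (B : Finset (Finset ℕ)) : Prop :=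
  ∃ (r : ℕ) (P : Fin r → Finset (Finset ℕ)),
    (∀ i, IsParallelClass Y (P i)) ∧ (∀ i, P i ⊆ B) ∧ ∀ b ∈ B, ∃! i, b ∈ P i

/-- The blocks of the derived design at a point `x`:
`{B \ {x} : x ∈ B, B ∈ B}`. -/
def derivedBlocks (B : Finset (Finset ℕ)) (x : ℕ) : Finset (Finset ℕ) :=
  (B.filter fun b => x ∈ b).image fun b => b.erase x

/-- A Steiner system S(t, k, v) on point set `X` with block collection `B`. -/
def IsSteiner (t k v : ℕ) (X : Finset ℕ) (B : Finset (Finset ℕ)) : Prop :=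
  X.card = v ∧ (∀ b ∈ B, b ⊆ X ∧ b.card = k) ∧
  ∀ T ⊆ X, T.card = t → ∃! b, b ∈ B ∧ T ⊆ b

/-- An RDS(t, k, v): a Steiner system S(t, k, v) whose derived design at every
point is resolvable. -/
def IsRDS (t k v : ℕ) (X : Finset ℕ) (B : Finset (Finset ℕ)) : Prop :=
  IsSteiner t k v X B ∧ ∀ x ∈ X, Resolvable (X.erase x) (derivedBlocks B x)

/-- Existence of an RDS(t, k, v). -/
def ExistsRDS (t k v : ℕ) : Prop := ∃ X B, IsRDS t k v X B

/-- Existence of an RDSQS(v), i.e. an RDS(3, 4, v). -/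
def ExistsRDSQS (v : ℕ) : Prop := ExistsRDS 3 4 v

/-- A Kirkman triple system KTS(v): a resolvable Steiner triple system. -/
def IsKTS (v : ℕ) (X : Finset ℕ) (B : Finset (Finset ℕ)) : Prop :=
  IsSteiner 2 3 v X B ∧ Resolvable X B

/-- Existence of a large set of Kirkman triple systems LKTS(v): a partition of
all 3-element subsets of a v-element set into v - 2 classes, each a KTS(v). -/
def ExistsLKTS (v : ℕ) : Prop :=
  ∃ (X : Finset ℕ) (C : Fin (v - 2) → Finset (Finset ℕ)),
    X.card = v ∧ (∀ i, IsKTS v X (C i)) ∧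
    (∀ T : Finset ℕ, (T ⊆ X ∧ T.card = 3) ↔ ∃ i, T ∈ C i) ∧
    ∀ (T : Finset ℕ) (i j : Fin (v - 2)), T ∈ C i → T ∈ C j → i = j

/-- A t-wise balanced design S(t, K, v) with block sizes from the set `K`. -/
def IsTBD (t : ℕ) (K : Set ℕ) (v : ℕ) (X : Finset ℕ) (B : Finset (Finset ℕ)) : Prop :=
  X.card = v ∧ (∀ b ∈ B, b ⊆ X ∧ b.card ∈ K) ∧
  ∀ T ⊆ X, T.card = t → ∃! b, b ∈ B ∧ T ⊆ b

/-- A group divisible design GDD(t, K, g*n) of type g^n: `Gs` is a partition of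
`X` into `n` groups of size `g`; blocks have sizes in `K`, meet every group in
at most one point, and every t-subset of `X` meeting every group in at most one
point lies in exactly one block. -/
def IsGDD (t : ℕ) (K : Set ℕ) (g n : ℕ) (X : Finset ℕ)
    (Gs Bs : Finset (Finset ℕ)) : Prop :=
  X.card = g * n ∧ Gs.card = n ∧
  (∀ G ∈ Gs, G ⊆ X ∧ G.card = g) ∧
  (∀ x ∈ X, ∃! G, G ∈ Gs ∧ x ∈ G) ∧
  (∀ b ∈ Bs, b ⊆ X ∧ b.card ∈ K) ∧
  (∀ b ∈ Bs, ∀ G ∈ Gs, (b ∩ G).card ≤ 1) ∧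
  ∀ T ⊆ X, T.card = t → (∀ G ∈ Gs, (T ∩ G).card ≤ 1) → ∃! b, b ∈ Bs ∧ T ⊆ b

/-- An RDGDD(t, K, g*n) of type g^n: a GDD whose derived design at every point
(on point set `X \ G`, where `G` is the group of the point) is resolvable. -/
def IsRDGDD (t : ℕ) (K : Set ℕ) (g n : ℕ) (X : Finset ℕ)
    (Gs Bs : Finset (Finset ℕ)) : Prop :=
  IsGDD t K g n X Gs Bs ∧
  ∀ x ∈ X, ∀ G ∈ Gs, x ∈ G → Resolvable (X \ G) (derivedBlocks Bs x)

/-- An RDSQS*(v): an SQS(v) with v ≡ 1 (mod 3) such that, for every point `x`,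
the derived blocks at `x` contain a parallel class `P'` (enumerated by `Bk`);
the multiset consisting of each triple of `P'` three times and each remaining
derived triple twice can be partitioned into (v-1) parallel classes
`P k l` (k ranging over Fin ((v-1)/3), l over Fin 3); and for each `k` the three
parallel classes `P k l` share the common triple `Bk k`. -/
def IsRDSQSstar (v : ℕ) (X : Finset ℕ) (B : Finset (Finset ℕ)) : Prop :=
  IsSteiner 3 4 v X B ∧ v % 3 = 1 ∧
  ∀ x ∈ X, ∃ (P' : Finset (Finset ℕ)) (Bk : Fin ((v - 1) / 3) → Finset ℕ)
    (P : Fin ((v - 1) / 3) → Fin 3 → Finset (Finset ℕ)),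
    P' ⊆ derivedBlocks B x ∧
    IsParallelClass (X.erase x) P' ∧
    (∀ k, Bk k ∈ P') ∧
    (∀ b ∈ P', ∃ k, Bk k = b) ∧
    Function.Injective Bk ∧
    (∀ k l, IsParallelClass (X.erase x) (P k l)) ∧
    ((∑ k, ∑ l, (P k l).val) =
        3 • P'.val + 2 • ((derivedBlocks B x) \ P').val) ∧
    ∀ k l, Bk k ∈ P k l

/-!
Let `q = 13` and let `K` be the field with `q ^ n` elements. The images of the projective line over
`𝔽_q` under the projective transformations of `K ∪ {∞}` are the circles of an
`S(3, q + 1, q ^ n + 1)` whose derived design at `∞` is the affine space `K` with its lines,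
resolved by direction. Replace every point of `K` by a group of three points. Over each circle
through `∞` place an SQS(40) whose blocks include every group together with `∞`, and over each other
circle a group divisible design of type `3 ^ 14`; in both, all derived designs are resolvable. At
every point, the classes containing the group blocks are merged, over all circles through `∞`, into
one parallel class; every other class is indexed by a class of circles together with a class of the
designs over them. The two ingredient designs are invariant under a regular cyclic group, so that
they are determined by their blocks through one point.
-/

variable {V W ι κ : Type*}

/-- `P` resolves the derived design at `x` of the block system `B`: blocks through `x` consist of
points adjacent to `x`, any two adjacent neighbours of `x` lie with `x` in exactly one block, and
the blocks through `x` are partitioned into classes `P i`, `i ∈ colors`, each of which covers every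
neighbour of `x` exactly once. Taking `adj` to be `≠` gives Steiner systems, and taking it to be
membership in different groups gives group divisible designs. -/
structure IsResolvedAt (adj : V → V → Prop) (colors : Set ι) (B : Set (Set V)) (x : V)
    (P : ι → Set (Set V)) : Prop where
  adj_of_mem : ∀ ⦃b⦄, b ∈ B → x ∈ b → ∀ ⦃y⦄, y ∈ b → x ≠ y → adj x y
  existsUnique_block : ∀ ⦃y z⦄, adj x y → adj x z → adj y z → ∃! b, b ∈ B ∧ x ∈ b ∧ y ∈ b ∧ z ∈ b
  mem_of_mem_class : ∀ ⦃i b⦄, b ∈ P i → i ∈ colors ∧ b ∈ B ∧ x ∈ b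
  existsUnique_color : ∀ ⦃b⦄, b ∈ B → x ∈ b → ∃! i, b ∈ P i
  existsUnique_mem_class : ∀ ⦃i⦄, i ∈ colors → ∀ ⦃y⦄, adj x y → ∃! b, b ∈ P i ∧ y ∈ b

/-- A system of blocks of size `k` whose derived design at every point has a resolution with
color set `colors`. -/
structure IsResolvedDesign (adj : V → V → Prop) (k : ℕ) (colors : Set ι) (B : Set (Set V)) :
    Prop where
  ncard_eq : ∀ ⦃b⦄, b ∈ B → b.ncard = k
  exists_isResolvedAt : ∀ x, ∃ P : ι → Set (Set V), IsResolvedAt adj colors B x P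

theorem IsResolvedAt.image {adj : V → V → Prop} {colors : Set ι} {B : Set (Set V)} {x : V}
    {P : ι → Set (Set V)} (h : IsResolvedAt adj colors B x P) {f : V → W}
    (hf : Function.Injective f) :
    IsResolvedAt (Relation.Map adj f f) colors ((f '' ·) '' B) (f x) fun i => (f '' ·) '' P i where
  adj_of_mem := by
    rintro _ ⟨b, hb, rfl⟩ hx _ ⟨y, hy, rfl⟩ hxy
    exact ⟨x, y, h.adj_of_mem hb (hf.mem_set_image.1 hx) hy (ne_of_apply_ne f hxy), rfl, rfl⟩
  existsUnique_block := by
    rintro _ _ ⟨x₁, y, hxy, hx₁, rfl⟩ ⟨x₂, z, hxz, hx₂, rfl⟩ hyz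
    obtain rfl := hf hx₁
    obtain rfl := hf hx₂
    rw [Relation.map_apply_apply hf hf] at hyz
    obtain ⟨b, hb, hb_unique⟩ := h.existsUnique_block hxy hxz hyz
    refine ⟨f '' b, by simpa [hf.mem_set_image, hf.image_injective.eq_iff] using hb, ?_⟩
    rintro _ ⟨⟨c, hc, rfl⟩, hmem⟩
    simp only [hf.mem_set_image] at hmem
    rw [hb_unique c ⟨hc, hmem⟩]
  mem_of_mem_class := by
    rintro i _ ⟨b, hb, rfl⟩
    obtain ⟨hi, hbB, hxb⟩ := h.mem_of_mem_class hb
    exact ⟨hi, Set.mem_image_of_mem _ hbB, Set.mem_image_of_mem f hxb⟩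
  existsUnique_color := by
    rintro _ ⟨b, hb, rfl⟩ hx
    simpa [hf.image_injective.eq_iff] using h.existsUnique_color hb (hf.mem_set_image.1 hx)
  existsUnique_mem_class := by
    rintro i hi _ ⟨x₁, y, hxy, hx₁, rfl⟩
    obtain rfl := hf hx₁
    obtain ⟨b, hb, hb_unique⟩ := h.existsUnique_mem_class hi hxy
    refine ⟨f '' b, by simpa [hf.mem_set_image, hf.image_injective.eq_iff] using hb, ?_⟩
    rintro _ ⟨⟨c, hc, rfl⟩, hmem⟩
    rw [hb_unique c ⟨hc, hf.mem_set_image.1 hmem⟩]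

theorem IsResolvedAt.image_colors {adj : V → V → Prop} {colors : Set ι} {B : Set (Set V)} {x : V}
    {P : ι → Set (Set V)} (h : IsResolvedAt adj colors B x P) {f : ι → κ}
    (hf : Function.Injective f) :
    IsResolvedAt adj (f '' colors) B x fun j => {b | ∃ i, f i = j ∧ b ∈ P i} where
  adj_of_mem := h.adj_of_mem
  existsUnique_block := h.existsUnique_block
  mem_of_mem_class := by
    rintro _ b ⟨i, rfl, hb⟩
    exact ⟨Set.mem_image_of_mem f (h.mem_of_mem_class hb).1, (h.mem_of_mem_class hb).2⟩
  existsUnique_color b hb hx := by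
    obtain ⟨i, hi, hi_unique⟩ := h.existsUnique_color hb hx
    refine ⟨f i, ⟨i, rfl, hi⟩, ?_⟩
    rintro _ ⟨j, rfl, hj⟩
    rw [hi_unique j hj]
  existsUnique_mem_class := by
    rintro _ ⟨i, hi, rfl⟩ y hxy
    simpa [hf.eq_iff] using h.existsUnique_mem_class hi hxy

theorem isResolvedAt_empty_of_notMem_range {f : V → W} (adj : V → V → Prop) (colors : Set ι)
    (B : Set (Set V)) {y : W} (hy : y ∉ Set.range f) :
    IsResolvedAt (Relation.Map adj f f) colors ((f '' ·) '' B) y fun _ => ∅ := by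
  have not_mem : ∀ b ∈ (f '' ·) '' B, y ∉ b := by
    rintro _ ⟨b, -, rfl⟩ ⟨x, -, rfl⟩
    exact hy ⟨x, rfl⟩
  have not_adj : ∀ z, ¬ Relation.Map adj f f y z := fun z ⟨x, _, _, hx, _⟩ => hy ⟨x, hx⟩
  exact ⟨fun b hb hyb => (not_mem b hb hyb).elim, fun z _ hz => (not_adj z hz).elim,
    fun _ _ hb => hb.elim, fun b hb hyb => (not_mem b hb hyb).elim,
    fun _ _ z hz => (not_adj z hz).elim⟩

theorem IsResolvedDesign.image {adj : V → V → Prop} {k : ℕ} {colors : Set ι} {B : Set (Set V)}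
    (h : IsResolvedDesign adj k colors B) {f : V → W} (hf : Function.Injective f) :
    IsResolvedDesign (Relation.Map adj f f) k colors ((f '' ·) '' B) where
  ncard_eq := by
    rintro _ ⟨b, hb, rfl⟩
    exact (Set.ncard_image_of_injective b hf).trans (h.ncard_eq hb)
  exists_isResolvedAt y := by
    by_cases hy : y ∈ Set.range f
    · obtain ⟨x, rfl⟩ := hy
      obtain ⟨P, hP⟩ := h.exists_isResolvedAt x
      exact ⟨_, hP.image hf⟩
    · exact ⟨_, isResolvedAt_empty_of_notMem_range adj colors B hy⟩

theorem IsResolvedDesign.image_colors {adj : V → V → Prop} {k : ℕ} {colors : Set ι}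
    {B : Set (Set V)} (h : IsResolvedDesign adj k colors B) {f : ι → κ}
    (hf : Function.Injective f) : IsResolvedDesign adj k (f '' colors) B where
  ncard_eq := h.ncard_eq
  exists_isResolvedAt x := by
    obtain ⟨P, hP⟩ := h.exists_isResolvedAt x
    exact ⟨_, hP.image_colors hf⟩

theorem IsResolvedDesign.exists_mem_of_adj [Nonempty ι] {adj : V → V → Prop} {k : ℕ}
    {B : Set (Set V)} (h : IsResolvedDesign adj k (Set.univ : Set ι) B) {x y : V}
    (hxy : adj x y) : ∃ b ∈ B, x ∈ b ∧ y ∈ b := by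
  obtain ⟨P, hP⟩ := h.exists_isResolvedAt x
  obtain ⟨b, ⟨hb, hy⟩, -⟩ := hP.existsUnique_mem_class (Set.mem_univ (Classical.arbitrary ι)) hxy
  exact ⟨b, (hP.mem_of_mem_class hb).2.1, (hP.mem_of_mem_class hb).2.2, hy⟩

theorem IsResolvedDesign.existsUnique_mem {adj : V → V → Prop} {k : ℕ} {colors : Set ι}
    {B : Set (Set V)} (h : IsResolvedDesign adj k colors B) {x y z : V} (hxy : adj x y)
    (hxz : adj x z) (hyz : adj y z) : ∃! b, b ∈ B ∧ x ∈ b ∧ y ∈ b ∧ z ∈ b :=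
  let ⟨_, hP⟩ := h.exists_isResolvedAt x
  hP.existsUnique_block hxy hxz hyz

theorem relationMap_equiv {adj : V → V → Prop} {adj' : W → W → Prop} (e : V ≃ W)
    (h : ∀ x y, adj x y ↔ adj' (e x) (e y)) : Relation.Map adj e e = adj' := by
  ext x y
  obtain ⟨x, rfl⟩ := e.surjective x
  obtain ⟨y, rfl⟩ := e.surjective y
  rw [Relation.map_apply_apply e.injective e.injective, h]

theorem IsResolvedAt.isResolvedDesign_of_transitive {adj : V → V → Prop} {k : ℕ} {colors : Set ι}
    {B : Set (Set V)} {x₀ : V} {P : ι → Set (Set V)} (h : IsResolvedAt adj colors B x₀ P)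
    (hk : ∀ b ∈ B, b.ncard = k)
    (htrans : ∀ x, ∃ e : V ≃ V,
      e x₀ = x ∧ (∀ y z, adj y z ↔ adj (e y) (e z)) ∧ (e '' ·) '' B = B) :
    IsResolvedDesign adj k colors B where
  ncard_eq := hk
  exists_isResolvedAt x := by
    obtain ⟨e, rfl, hadj, hB⟩ := htrans x
    have := h.image e.injective
    rw [relationMap_equiv e hadj, hB] at this
    exact ⟨_, this⟩

/-- The adjacency of the complete graph on the vertex set `X`. -/
def AdjOn (X : Finset ℕ) (x y : ℕ) : Prop := x ∈ X ∧ y ∈ X ∧ x ≠ y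

open Classical in
/-- The members of `B` that are subsets of `X`, as finite sets. -/
noncomputable def finsetBlocks (X : Finset ℕ) (B : Set (Set ℕ)) : Finset (Finset ℕ) :=
  {s ∈ X.powerset | (s : Set ℕ) ∈ B}

theorem mem_finsetBlocks {X : Finset ℕ} {B : Set (Set ℕ)} {s : Finset ℕ} :
    s ∈ finsetBlocks X B ↔ s ⊆ X ∧ (s : Set ℕ) ∈ B := by
  simp [finsetBlocks]

theorem IsResolvedAt.exists_finset_coe_eq {X : Finset ℕ} {colors : Set ι} {B : Set (Set ℕ)} {x : ℕ}
    {P : ι → Set (Set ℕ)} (h : IsResolvedAt (AdjOn X) colors B x P) (hx : x ∈ X) {b : Set ℕ}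
    (hb : b ∈ B) (hxb : x ∈ b) : ∃ s ⊆ X, (s : Set ℕ) = b := by
  have b_subset : b ⊆ X := fun y hy => by
    by_cases hxy : x = y
    · exact hxy ▸ hx
    · exact (h.adj_of_mem hb hxb hy hxy).2.1
  lift b to Finset ℕ using X.finite_toSet.subset b_subset
  exact ⟨b, by simpa using b_subset, rfl⟩

theorem IsResolvedAt.isParallelClass {X : Finset ℕ} {colors : Set ι} {B : Set (Set ℕ)} {x : ℕ}
    {P : ι → Set (Set ℕ)} (h : IsResolvedAt (AdjOn X) colors B x P) (hx : x ∈ X) {i : ι}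
    (hi : i ∈ colors) :
    IsParallelClass (X.erase x) ((finsetBlocks X (P i)).image (erase · x)) := by
  refine ⟨?_, fun y hy => ?_⟩
  · simp only [mem_image, forall_exists_index, and_imp, forall_apply_eq_imp_iff₂]
    exact fun s hs => erase_subset_erase x (mem_finsetBlocks.1 hs).1
  · obtain ⟨hyx, hyX⟩ := mem_erase.1 hy
    obtain ⟨b, ⟨hbP, hyb⟩, hb_unique⟩ := h.existsUnique_mem_class hi ⟨hx, hyX, hyx.symm⟩
    have hbB := (h.mem_of_mem_class hbP).2
    obtain ⟨s, hsX, rfl⟩ := h.exists_finset_coe_eq hx hbB.1 hbB.2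
    refine ⟨s.erase x, ⟨mem_image_of_mem _ (mem_finsetBlocks.2 ⟨hsX, hbP⟩),
      mem_erase.2 ⟨hyx, hyb⟩⟩, ?_⟩
    rintro _ ⟨ht_image, hyt⟩
    obtain ⟨t, ht, rfl⟩ := mem_image.1 ht_image
    rw [Finset.coe_injective (hb_unique t ⟨(mem_finsetBlocks.1 ht).2, mem_of_mem_erase hyt⟩)]

theorem IsResolvedAt.resolvable [Finite ι] {X : Finset ℕ} {B : Set (Set ℕ)} {x : ℕ}
    {P : ι → Set (Set ℕ)} (h : IsResolvedAt (AdjOn X) Set.univ B x P) (hx : x ∈ X) :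
    Resolvable (X.erase x) (derivedBlocks (finsetBlocks X B) x) := by
  have e : Fin (Nat.card ι) ≃ ι := (Finite.equivFin ι).symm
  refine ⟨Nat.card ι, fun r => (finsetBlocks X (P (e r))).image (erase · x),
    fun r => h.isParallelClass hx (Set.mem_univ _), fun r => ?_, fun b hb => ?_⟩
  · refine image_subset_image fun s hs => ?_
    obtain ⟨hsX, hsP⟩ := mem_finsetBlocks.1 hs
    obtain ⟨-, hsB, hxs⟩ := h.mem_of_mem_class hsP
    exact mem_filter.2 ⟨mem_finsetBlocks.2 ⟨hsX, hsB⟩, hxs⟩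
  · obtain ⟨s, hs, rfl⟩ := mem_image.1 hb
    obtain ⟨hs, hxs⟩ := mem_filter.1 hs
    obtain ⟨hsX, hsB⟩ := mem_finsetBlocks.1 hs
    obtain ⟨i, hi, hi_unique⟩ := h.existsUnique_color hsB hxs
    refine ⟨e.symm i, mem_image_of_mem _ (mem_finsetBlocks.2 ⟨hsX, by simpa using hi⟩),
      fun r hr => ?_⟩
    obtain ⟨t, ht, hts⟩ := mem_image.1 hr
    have htP := (mem_finsetBlocks.1 ht).2
    have t_eq_s : t = s := by
      rw [← insert_erase (h.mem_of_mem_class htP).2.2, hts, insert_erase hxs]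
    exact e.eq_symm_apply.2 (hi_unique _ (t_eq_s ▸ htP))

theorem IsResolvedDesign.isSteiner {X : Finset ℕ} {k : ℕ} {colors : Set ι} {B : Set (Set ℕ)}
    (h : IsResolvedDesign (AdjOn X) k colors B) : IsSteiner 3 k #X X (finsetBlocks X B) := by
  refine ⟨rfl, fun s hs => ?_, fun T hTX hT => ?_⟩
  · obtain ⟨hsX, hsB⟩ := mem_finsetBlocks.1 hs
    exact ⟨hsX, by simpa using h.ncard_eq hsB⟩
  · obtain ⟨x, y, z, hxy, hxz, hyz, rfl⟩ := card_eq_three.1 hT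
    simp only [insert_subset_iff, singleton_subset_iff] at hTX ⊢
    obtain ⟨hx, hy, hz⟩ := hTX
    obtain ⟨P, hP⟩ := h.exists_isResolvedAt x
    obtain ⟨b, ⟨hb, hxb, hyzb⟩, hb_unique⟩ :=
      h.existsUnique_mem ⟨hx, hy, hxy⟩ ⟨hx, hz, hxz⟩ ⟨hy, hz, hyz⟩
    obtain ⟨s, hsX, rfl⟩ := hP.exists_finset_coe_eq hx hb hxb
    refine ⟨s, ⟨mem_finsetBlocks.2 ⟨hsX, hb⟩, hxb, hyzb⟩, fun t ht => ?_⟩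
    exact Finset.coe_injective (hb_unique t ⟨(mem_finsetBlocks.1 ht.1).2, ht.2⟩)

theorem IsResolvedDesign.existsRDS [Finite V] [Finite ι] {k : ℕ} {B : Set (Set V)}
    (h : IsResolvedDesign (· ≠ ·) k (Set.univ : Set ι) B) : ExistsRDS 3 k (Nat.card V) := by
  have e : V ≃ Fin (Nat.card V) := Finite.equivFin V
  have map_ne : Relation.Map (· ≠ ·) (fun v => (e v : ℕ)) (fun v => (e v : ℕ)) =
      AdjOn (range (Nat.card V)) := by
    ext a b
    simp only [Relation.Map, AdjOn, mem_range]
    constructor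
    · rintro ⟨v, w, hvw, rfl, rfl⟩
      exact ⟨(e v).2, (e w).2, fun hval => hvw (e.injective (Fin.ext hval))⟩
    · rintro ⟨ha, hb, hab⟩
      exact ⟨e.symm ⟨a, ha⟩, e.symm ⟨b, hb⟩, by simpa using hab, by simp, by simp⟩
  have hℕ := h.image (Fin.val_injective.comp e.injective)
  simp only [Function.comp_def, map_ne] at hℕ
  have steiner := hℕ.isSteiner
  rw [card_range] at steiner
  refine ⟨_, _, steiner, fun x hx => ?_⟩
  obtain ⟨P, hP⟩ := hℕ.exists_isResolvedAt x
  exact hP.resolvable hx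

section TranslationDesign

variable {G : Type*} [AddCommGroup G]

/-- The points other than `0` of the block through `0` encoded by `t`. -/
def tripleEntries (t : G × G × G) : List G := [t.1, t.2.1, t.2.2]

/-- The block through `0` encoded by a triple. -/
def tripleBlock (t : G × G × G) : Set G := {0, t.1, t.2.1, t.2.2}

theorem zero_mem_tripleBlock (t : G × G × G) : (0 : G) ∈ tripleBlock t := Set.mem_insert 0 _

theorem mem_tripleBlock_iff {t : G × G × G} {y : G} (hy : y ≠ 0) :
    y ∈ tripleBlock t ↔ y ∈ tripleEntries t := by
  simp [tripleBlock, tripleEntries, hy]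

/-- Encodes the translate of the block of `t` in which the first entry of `t` has moved to `0`. -/
def rotateTriple (t : G × G × G) : G × G × G := (t.2.1 - t.1, t.2.2 - t.1, -t.1)

/-- `T i` lists the triples of the `i`-th parallel class of the derived design at `0` of a
translation-invariant system of quadruples in which `x` and `y` are adjacent if `A (y - x)`. -/
structure IsBaseResolution (A : G → Prop) (T : ι → List (G × G × G)) : Prop where
  allowed : ∀ i, ∀ t ∈ T i, ∀ y ∈ tripleEntries t, A y
  rotate_mem : ∀ i, ∀ t ∈ T i, ∃ j, rotateTriple t ∈ T j
  existsUnique_triple : ∀ i y, A y → ∃! t, t ∈ T i ∧ y ∈ tripleEntries t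
  existsUnique_class : ∀ y, A y → ∀ z, A z → A (z - y) →
    ∃! i, ∃ t ∈ T i, y ∈ tripleEntries t ∧ z ∈ tripleEntries t

-- The universal quantifiers over members of a list are phrased with `List.all`, because the default
-- instance would run through the whole finite type `G × G × G`.
instance [Fintype ι] [Fintype G] [DecidableEq G] (A : G → Prop) [DecidablePred A]
    (T : ι → List (G × G × G)) : Decidable (IsBaseResolution A T) :=
  decidable_of_iff
    ((∀ i, (T i).all fun t => (tripleEntries t).all fun y => A y) ∧
      (∀ i, (T i).all fun t => ∃ j, rotateTriple t ∈ T j) ∧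
      (∀ i y, A y → ∃! t, t ∈ T i ∧ y ∈ tripleEntries t) ∧
      ∀ y, A y → ∀ z, A z → A (z - y) →
        #{i | ((T i).filter (y ∈ tripleEntries ·)).any (z ∈ tripleEntries ·)} = 1) <| by
    simp only [List.all_eq_true, List.any_eq_true, List.mem_filter, decide_eq_true_eq, and_assoc,
      ← Fintype.existsUnique_iff_card_one]
    exact ⟨fun ⟨h₁, h₂, h₃, h₄⟩ => ⟨h₁, h₂, h₃, h₄⟩, fun ⟨h₁, h₂, h₃, h₄⟩ => ⟨h₁, h₂, h₃, h₄⟩⟩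

/-- The translates of the blocks encoded by the triples in `T`. -/
def translateBlocks (T : ι → List (G × G × G)) : Set (Set G) :=
  {b | ∃ x i, ∃ t ∈ T i, (x + ·) '' tripleBlock t = b}

theorem tripleBlock_mem_translateBlocks {T : ι → List (G × G × G)} {i : ι} {t : G × G × G}
    (ht : t ∈ T i) : tripleBlock t ∈ translateBlocks T :=
  ⟨0, i, t, ht, by simp⟩

theorem image_add_left_mem_translateBlocks {T : ι → List (G × G × G)} {b : Set G}
    (hb : b ∈ translateBlocks T) (x : G) : (x + ·) '' b ∈ translateBlocks T := by
  obtain ⟨y, i, t, ht, rfl⟩ := hb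
  exact ⟨x + y, i, t, ht, by simp only [Set.image_image, add_assoc]⟩

theorem image_add_left_translateBlocks (x : G) (T : ι → List (G × G × G)) :
    ((x + ·) '' ·) '' translateBlocks T = translateBlocks T := by
  refine subset_antisymm (Set.image_subset_iff.2 fun b hb =>
    image_add_left_mem_translateBlocks hb x) fun b hb => ?_
  exact ⟨(-x + ·) '' b, image_add_left_mem_translateBlocks hb (-x),
    by simp only [Set.image_image, add_neg_cancel_left, Set.image_id']⟩

namespace IsBaseResolution

variable {A : G → Prop} {T : ι → List (G × G × G)}

theorem exists_tripleBlock_eq_image_sub (h : IsBaseResolution A T) {i : ι} {t : G × G × G}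
    (ht : t ∈ T i) {x : G} (hx : x ∈ tripleBlock t) :
    ∃ j, ∃ s ∈ T j, tripleBlock s = (· - x) '' tripleBlock t := by
  obtain ⟨j₁, h₁⟩ := h.rotate_mem i t ht
  obtain ⟨j₂, h₂⟩ := h.rotate_mem j₁ _ h₁
  obtain ⟨j₃, h₃⟩ := h.rotate_mem j₂ _ h₂
  obtain ⟨a, b, c⟩ := t
  obtain rfl | rfl | rfl | rfl := hx
  · exact ⟨i, _, ht, by simp⟩
  · refine ⟨j₁, _, h₁, ?_⟩
    simp only [tripleBlock, rotateTriple, Set.image_insert_eq, Set.image_singleton]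
    grind
  · refine ⟨j₂, _, h₂, ?_⟩
    simp only [tripleBlock, rotateTriple, Set.image_insert_eq, Set.image_singleton]
    grind
  · refine ⟨j₃, _, h₃, ?_⟩
    simp only [tripleBlock, rotateTriple, Set.image_insert_eq, Set.image_singleton]
    grind

theorem allowed_of_mem_tripleBlock (h : IsBaseResolution A T) {i : ι} {t : G × G × G} (ht : t ∈ T i)
    {y : G} (hy : y ∈ tripleBlock t) (hy₀ : y ≠ 0) : A y :=
  h.allowed i t ht y ((mem_tripleBlock_iff hy₀).1 hy)

theorem exists_tripleBlock_eq_of_mem_translateBlocks (h : IsBaseResolution A T) {b : Set G}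
    (hb : b ∈ translateBlocks T) (h₀ : 0 ∈ b) : ∃ i, ∃ t ∈ T i, tripleBlock t = b := by
  obtain ⟨x, i, t, ht, rfl⟩ := hb
  obtain ⟨y, hy, hxy : x + y = 0⟩ := h₀
  obtain ⟨j, s, hs, hst⟩ := h.exists_tripleBlock_eq_image_sub ht hy
  obtain rfl : x = -y := eq_neg_of_add_eq_zero_left hxy
  exact ⟨j, s, hs, by simpa [sub_eq_neg_add] using hst⟩

theorem allowed_sub (h : IsBaseResolution A T) {i : ι} {t : G × G × G} (ht : t ∈ T i) :
    A (t.2.1 - t.1) ∧ A (t.2.2 - t.1) ∧ A (t.2.2 - t.2.1) := by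
  obtain ⟨j, hj⟩ := h.rotate_mem i t ht
  obtain ⟨k, hk⟩ := h.rotate_mem j _ hj
  refine ⟨h.allowed j _ hj _ (by simp [tripleEntries, rotateTriple]),
    h.allowed j _ hj _ (by simp [tripleEntries, rotateTriple]),
    h.allowed k _ hk _ (by simp [tripleEntries, rotateTriple])⟩

theorem ncard_eq_four (h : IsBaseResolution A T) (hA : ¬ A 0) {b : Set G}
    (hb : b ∈ translateBlocks T) : b.ncard = 4 := by
  obtain ⟨x, i, t, ht, rfl⟩ := hb
  rw [Set.ncard_image_of_injective _ (add_right_injective x)]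
  have ne_of_allowed {y z : G} (hyz : A (z - y)) : y ≠ z := fun hyz' =>
    hA (by rwa [hyz', sub_self] at hyz)
  have entry_ne {y : G} (hy : y ∈ tripleEntries t) : 0 ≠ y :=
    ne_of_allowed (by simpa using h.allowed i t ht y hy)
  obtain ⟨h₁, h₂, h₃⟩ := h.allowed_sub ht
  have four : (tripleBlock t).encard = 4 := Set.encard_eq_four.2 ⟨0, t.1, t.2.1, t.2.2,
    entry_ne (by simp [tripleEntries]), entry_ne (by simp [tripleEntries]),
    entry_ne (by simp [tripleEntries]), ne_of_allowed h₁, ne_of_allowed h₂, ne_of_allowed h₃, rfl⟩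
  simp [Set.ncard, four]

theorem existsUnique_class_of_mem_translateBlocks (h : IsBaseResolution A T) (hA : ¬ A 0)
    {b : Set G} (hb : b ∈ translateBlocks T) (h₀ : 0 ∈ b) :
    ∃! i, ∃ t ∈ T i, tripleBlock t = b := by
  obtain ⟨i, t, ht, rfl⟩ := h.exists_tripleBlock_eq_of_mem_translateBlocks hb h₀
  have ne_zero {y : G} (hy : y ∈ tripleEntries t) : y ≠ 0 := fun hy₀ =>
    hA (hy₀ ▸ h.allowed i t ht y hy)
  have mem₁ : t.1 ∈ tripleEntries t := by simp [tripleEntries]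
  have mem₂ : t.2.1 ∈ tripleEntries t := by simp [tripleEntries]
  refine ⟨i, ⟨t, ht, rfl⟩, ?_⟩
  rintro j ⟨s, hs, hst⟩
  refine (h.existsUnique_class _ (h.allowed i t ht _ mem₁) _ (h.allowed i t ht _ mem₂)
    (h.allowed_sub ht).1).unique ⟨s, hs, ?_⟩ ⟨t, ht, mem₁, mem₂⟩
  rw [← mem_tripleBlock_iff (ne_zero mem₁), ← mem_tripleBlock_iff (ne_zero mem₂), hst]
  exact ⟨(mem_tripleBlock_iff (ne_zero mem₁)).2 mem₁, (mem_tripleBlock_iff (ne_zero mem₂)).2 mem₂⟩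

theorem isResolvedAt_zero (h : IsBaseResolution A T) (hA : ¬ A 0) :
    IsResolvedAt (fun x y => A (y - x)) Set.univ (translateBlocks T) 0
      fun i => {b | ∃ t ∈ T i, tripleBlock t = b} where
  adj_of_mem b hb h₀ y hy hy₀ := by
    obtain ⟨i, t, ht, rfl⟩ := h.exists_tripleBlock_eq_of_mem_translateBlocks hb h₀
    rw [sub_zero]
    exact h.allowed_of_mem_tripleBlock ht hy hy₀.symm
  existsUnique_block y z hy hz hyz := by
    rw [sub_zero] at hy hz
    have hy₀ : y ≠ 0 := fun hy₀ => hA (hy₀ ▸ hy)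
    have hz₀ : z ≠ 0 := fun hz₀ => hA (hz₀ ▸ hz)
    obtain ⟨i, ⟨t, ht, hyt, hzt⟩, hi_unique⟩ := h.existsUnique_class y hy z hz hyz
    refine ⟨tripleBlock t, ⟨tripleBlock_mem_translateBlocks ht, zero_mem_tripleBlock t,
      (mem_tripleBlock_iff hy₀).2 hyt, (mem_tripleBlock_iff hz₀).2 hzt⟩, ?_⟩
    rintro b ⟨hb, h₀, hyb, hzb⟩
    obtain ⟨j, s, hs, rfl⟩ := h.exists_tripleBlock_eq_of_mem_translateBlocks hb h₀
    rw [mem_tripleBlock_iff hy₀] at hyb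
    rw [mem_tripleBlock_iff hz₀] at hzb
    obtain rfl := hi_unique j ⟨s, hs, hyb, hzb⟩
    rw [(h.existsUnique_triple j y hy).unique ⟨hs, hyb⟩ ⟨ht, hyt⟩]
  mem_of_mem_class := by
    rintro i _ ⟨t, ht, rfl⟩
    exact ⟨trivial, tripleBlock_mem_translateBlocks ht, zero_mem_tripleBlock t⟩
  existsUnique_color b hb h₀ := h.existsUnique_class_of_mem_translateBlocks hA hb h₀
  existsUnique_mem_class i _ y hy := by
    rw [sub_zero] at hy
    have hy₀ : y ≠ 0 := fun hy₀ => hA (hy₀ ▸ hy)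
    obtain ⟨t, ⟨ht, hyt⟩, ht_unique⟩ := h.existsUnique_triple i y hy
    refine ⟨tripleBlock t, ⟨⟨t, ht, rfl⟩, (mem_tripleBlock_iff hy₀).2 hyt⟩, ?_⟩
    rintro _ ⟨⟨s, hs, rfl⟩, hys⟩
    rw [ht_unique s ⟨hs, (mem_tripleBlock_iff hy₀).1 hys⟩]

theorem isResolvedDesign (h : IsBaseResolution A T) (hA : ¬ A 0) :
    IsResolvedDesign (fun x y => A (y - x)) 4 (Set.univ : Set ι) (translateBlocks T) := by
  refine (h.isResolvedAt_zero hA).isResolvedDesign_of_transitive (fun b hb => h.ncard_eq_four hA hb)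
    fun x => ⟨Equiv.addLeft x, add_zero x, fun y z => ?_, image_add_left_translateBlocks x T⟩
  rw [Equiv.coe_addLeft, add_sub_add_left_eq_sub]

end IsBaseResolution

end TranslationDesign

/-- The parallel classes at `0` of a cyclic group divisible design with groups of size 3, the
cosets of the subgroup of order 3; found by computer search. -/
def gddBaseTriples : Fin 18 → List (Fin 42 × Fin 42 × Fin 42) :=
  ![[(1, 3, 32), (2, 21, 26), (4, 6, 8), (5, 30, 40), (7, 25, 31), (9, 27, 29), (10, 20, 36),
    (11, 22, 37), (12, 16, 23), (13, 38, 39), (15, 33, 41), (17, 19, 34), (18, 24, 35)],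
   [(1, 36, 41), (2, 11, 19), (3, 7, 39), (4, 15, 16), (5, 22, 31), (6, 13, 29), (8, 9, 24),
    (10, 27, 40), (12, 21, 30), (17, 26, 37), (18, 20, 33), (23, 25, 34), (32, 35, 38)],
   [(1, 23, 24), (2, 4, 38), (3, 16, 41), (5, 13, 18), (6, 35, 36), (7, 11, 17), (8, 31, 33),
    (9, 20, 25), (10, 26, 32), (12, 27, 34), (15, 22, 30), (19, 21, 37), (29, 39, 40)],
   [(1, 8, 30), (2, 17, 25), (3, 19, 23), (4, 24, 27), (5, 37, 39), (6, 32, 40), (7, 29, 41),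
    (9, 21, 33), (10, 15, 18), (11, 26, 31), (12, 13, 20), (16, 36, 38), (22, 34, 35)],
   [(1, 7, 13), (2, 20, 27), (3, 11, 24), (4, 10, 35), (5, 29, 34), (6, 25, 33), (8, 15, 26),
    (9, 31, 36), (12, 19, 32), (16, 21, 40), (17, 18, 39), (22, 23, 41), (30, 37, 38)],
   [(1, 16, 34), (2, 33, 39), (3, 9, 26), (4, 11, 30), (5, 21, 23), (6, 31, 38), (7, 15, 27),
    (8, 20, 35), (10, 12, 17), (13, 22, 40), (18, 19, 41), (24, 29, 37), (25, 32, 36)],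
   [(1, 19, 20), (2, 6, 22), (3, 5, 36), (4, 9, 13), (7, 8, 12), (10, 39, 41), (11, 21, 34),
    (15, 23, 40), (16, 18, 37), (17, 27, 38), (24, 25, 30), (26, 33, 35), (29, 31, 32)],
   [(1, 10, 33), (2, 9, 35), (3, 4, 29), (5, 16, 27), (6, 23, 39), (7, 20, 30), (8, 13, 37),
    (11, 15, 32), (12, 18, 31), (17, 21, 22), (19, 24, 40), (25, 38, 41), (26, 34, 36)],
   [(1, 5, 35), (2, 36, 40), (3, 20, 21), (4, 12, 22), (6, 17, 24), (7, 10, 37), (8, 18, 38),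
    (9, 32, 41), (11, 16, 33), (13, 31, 34), (15, 19, 39), (23, 27, 30), (25, 26, 29)],
   [(1, 22, 25), (2, 31, 41), (3, 27, 37), (4, 7, 19), (5, 12, 15), (6, 16, 26), (8, 21, 39),
    (9, 17, 40), (10, 30, 34), (11, 18, 36), (13, 23, 35), (20, 24, 32), (29, 33, 38)],
   [(1, 9, 12), (2, 18, 23), (3, 33, 34), (4, 20, 40), (5, 17, 41), (6, 15, 37), (7, 26, 38),
    (8, 19, 29), (10, 21, 25), (11, 27, 35), (13, 24, 36), (16, 22, 32), (30, 31, 39)],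
   [(1, 6, 18), (2, 7, 32), (3, 12, 25), (4, 21, 31), (5, 24, 26), (8, 10, 16), (9, 22, 39),
    (11, 23, 29), (13, 30, 33), (15, 17, 35), (19, 27, 36), (20, 37, 41), (34, 38, 40)],
   [(1, 21, 38), (2, 3, 13), (4, 23, 26), (5, 6, 7), (8, 11, 41), (9, 10, 19), (12, 36, 37),
    (15, 20, 31), (16, 29, 35), (17, 30, 32), (18, 25, 40), (22, 27, 33), (24, 34, 39)],
   [(1, 26, 39), (2, 5, 10), (3, 18, 22), (4, 33, 37), (6, 19, 30), (7, 23, 36), (8, 25, 27),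
    (9, 15, 34), (11, 12, 38), (13, 21, 32), (16, 24, 31), (17, 20, 29), (35, 40, 41)],
   [(1, 27, 31), (2, 15, 24), (3, 30, 35), (4, 36, 39), (5, 9, 38), (6, 12, 41), (7, 33, 40),
    (8, 17, 23), (10, 11, 13), (16, 19, 25), (18, 21, 29), (20, 22, 26), (32, 34, 37)],
   [(1, 4, 17), (2, 8, 34), (3, 6, 10), (5, 11, 20), (7, 9, 16), (12, 35, 39), (13, 15, 25),
    (18, 26, 27), (19, 22, 38), (21, 24, 41), (23, 32, 33), (29, 30, 36), (31, 37, 40)],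
   [(1, 11, 40), (2, 12, 29), (3, 15, 38), (4, 34, 41), (5, 8, 32), (6, 21, 27), (7, 22, 24),
    (9, 18, 30), (10, 23, 31), (13, 19, 26), (16, 20, 39), (17, 33, 36), (25, 35, 37)],
   [(1, 2, 37), (3, 8, 40), (4, 5, 25), (6, 9, 11), (7, 18, 34), (10, 22, 29), (12, 24, 33),
    (13, 16, 17), (15, 21, 36), (19, 31, 35), (20, 23, 38), (26, 30, 41), (27, 32, 39)]]

/-- The parallel classes at `0` of a cyclic Steiner quadruple system of order 40; found by computer
search. -/
def sqsBaseTriples : Fin 19 → List (Fin 40 × Fin 40 × Fin 40) :=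
  ![[(1, 29, 30), (2, 4, 11), (3, 17, 34), (5, 21, 38), (6, 28, 37), (7, 13, 26), (8, 15, 19),
    (9, 22, 25), (10, 23, 27), (12, 14, 33), (16, 20, 24), (18, 36, 39), (31, 32, 35)],
   [(1, 3, 32), (2, 26, 33), (4, 17, 27), (5, 6, 39), (7, 8, 29), (9, 21, 30), (10, 19, 31),
    (11, 14, 25), (12, 22, 24), (13, 23, 36), (15, 20, 35), (16, 28, 38), (18, 34, 37)],
   [(1, 11, 12), (2, 24, 32), (3, 7, 10), (4, 5, 31), (6, 17, 21), (8, 16, 18), (9, 13, 14),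
    (15, 22, 27), (19, 25, 36), (20, 26, 34), (23, 35, 38), (28, 29, 39), (30, 33, 37)],
   [(1, 34, 35), (2, 5, 13), (3, 21, 37), (4, 8, 24), (6, 14, 20), (7, 9, 33), (10, 11, 39),
    (12, 19, 27), (15, 26, 29), (16, 32, 36), (17, 18, 25), (22, 30, 38), (23, 28, 31)],
   [(1, 13, 39), (2, 18, 30), (3, 4, 22), (5, 20, 25), (6, 9, 23), (7, 36, 38), (8, 26, 31),
    (10, 12, 28), (11, 17, 29), (14, 21, 27), (15, 24, 37), (16, 33, 35), (19, 32, 34)],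
   [(1, 24, 26), (2, 9, 38), (3, 12, 35), (4, 20, 36), (5, 11, 27), (6, 19, 33), (7, 15, 28),
    (8, 10, 32), (13, 17, 30), (14, 31, 37), (16, 29, 34), (18, 21, 22), (23, 25, 39)],
   [(1, 2, 14), (3, 25, 26), (4, 13, 19), (5, 7, 34), (6, 18, 29), (8, 35, 37), (9, 16, 27),
    (10, 20, 30), (11, 22, 28), (12, 38, 39), (15, 32, 33), (17, 31, 36), (21, 23, 24)],
   [(1, 17, 38), (2, 10, 15), (3, 5, 28), (4, 25, 33), (6, 8, 12), (7, 27, 30), (9, 24, 34),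
    (11, 35, 36), (13, 16, 31), (14, 18, 26), (19, 20, 29), (21, 32, 39), (22, 23, 37)],
   [(1, 20, 31), (2, 6, 34), (3, 23, 30), (4, 15, 39), (5, 36, 37), (7, 12, 25), (8, 9, 11),
    (10, 18, 35), (13, 22, 29), (14, 28, 32), (16, 21, 26), (17, 19, 24), (27, 33, 38)],
   [(1, 5, 16), (2, 7, 23), (3, 13, 20), (4, 21, 35), (6, 10, 36), (8, 14, 34), (9, 12, 18),
    (11, 24, 33), (15, 25, 31), (17, 22, 32), (19, 30, 39), (26, 27, 28), (29, 37, 38)],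
   [(1, 22, 33), (2, 21, 28), (3, 18, 27), (4, 10, 14), (5, 19, 35), (6, 26, 32), (7, 17, 20),
    (8, 13, 38), (9, 15, 36), (11, 30, 31), (12, 23, 34), (16, 37, 39), (24, 25, 29)],
   [(1, 6, 7), (2, 20, 22), (3, 8, 39), (4, 12, 26), (5, 15, 23), (9, 32, 37), (10, 16, 25),
    (11, 18, 19), (13, 27, 34), (14, 30, 35), (17, 28, 33), (21, 29, 36), (24, 31, 38)],
   [(1, 4, 9), (2, 31, 39), (3, 14, 29), (5, 10, 24), (6, 15, 30), (7, 11, 32), (8, 21, 33),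
    (12, 13, 37), (16, 19, 22), (17, 23, 26), (18, 20, 38), (25, 27, 35), (28, 34, 36)],
   [(1, 8, 23), (2, 25, 37), (3, 15, 16), (4, 18, 28), (5, 14, 22), (6, 11, 13), (7, 19, 21),
    (9, 17, 35), (10, 34, 38), (12, 20, 32), (24, 27, 39), (26, 30, 36), (29, 31, 33)],
   [(1, 19, 37), (2, 12, 36), (3, 9, 31), (4, 30, 34), (5, 18, 33), (6, 25, 38), (7, 24, 35),
    (8, 20, 28), (10, 22, 26), (11, 16, 23), (13, 15, 21), (14, 17, 39), (27, 29, 32)],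
   [(1, 10, 21), (2, 29, 35), (3, 11, 38), (4, 6, 16), (5, 9, 26), (7, 18, 31), (8, 22, 36),
    (12, 15, 17), (13, 25, 32), (14, 19, 23), (20, 27, 37), (24, 28, 30), (33, 34, 39)],
   [(1, 15, 18), (2, 3, 19), (4, 32, 38), (5, 8, 17), (6, 27, 31), (7, 22, 39), (9, 10, 29),
    (11, 26, 37), (12, 16, 30), (13, 28, 35), (14, 24, 36), (20, 23, 33), (21, 25, 34)],
   [(1, 27, 36), (2, 16, 17), (3, 6, 24), (4, 7, 37), (5, 12, 29), (8, 25, 30), (9, 19, 28),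
    (10, 13, 33), (11, 20, 21), (14, 15, 38), (18, 23, 32), (22, 31, 34), (26, 35, 39)],
   [(1, 25, 28), (2, 8, 27), (3, 33, 36), (4, 23, 29), (5, 30, 32), (6, 22, 35), (7, 14, 16),
    (9, 20, 39), (10, 17, 37), (11, 15, 34), (12, 21, 31), (13, 18, 24), (19, 26, 38)]]

set_option maxRecDepth 100000 in
theorem isBaseResolution_gddBaseTriples :
    IsBaseResolution (fun x : Fin 42 => x.val % 14 ≠ 0) gddBaseTriples := by
  decide +kernel

set_option maxRecDepth 100000 in
theorem isBaseResolution_sqsBaseTriples :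
    IsBaseResolution (fun x : Fin 40 => x ≠ 0) sqsBaseTriples := by
  decide +kernel

theorem exists_isResolvedDesign_fst_ne : ∃ B, IsResolvedDesign
    (fun x y : Fin 14 × Fin 3 => x.1 ≠ y.1) 4 (Set.univ : Set (Fin 18)) B := by
  let e : Fin 42 ≃ Fin 14 × Fin 3 :=
    (finProdFinEquiv (m := 3) (n := 14)).symm.trans (Equiv.prodComm (Fin 3) (Fin 14))
  have e_fst (x : Fin 42) : ((e x).1 : ℕ) = x % 14 := rfl
  have h := (isBaseResolution_gddBaseTriples.isResolvedDesign (by simp)).image e.injective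
  rw [relationMap_equiv (adj' := fun x y => x.1 ≠ y.1) e fun x y => ?_] at h
  · exact ⟨_, h⟩
  · simp only [ne_eq, Fin.ext_iff, e_fst, Fin.val_sub]
    omega

theorem exists_isResolvedDesign_ne_fin_forty :
    ∃ B, IsResolvedDesign (fun x y : Fin 40 => x ≠ y) 4 (Set.univ : Set (Fin 19)) B := by
  have h := isBaseResolution_sqsBaseTriples.isResolvedDesign (by simp)
  simp only [ne_eq, sub_eq_zero, eq_comm] at h
  exact ⟨_, h⟩

section FiberDesign

variable {K γ D : Type*}

/-- The projection sending each point of the group `{u} × γ` to `u` and fixing the point at infinity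
`none`. -/
def fiberProj : Option (K × γ) → Option K := Option.map Prod.fst

/-- The block formed by the group `{u} × γ` and the point at infinity. -/
def groupBlock (γ : Type*) (u : K) : Set (Option (K × γ)) := fiberProj ⁻¹' {none, some u}

/-- Two points over `C` are adjacent if they are distinct and, unless `C` passes through infinity,
lie in different groups. -/
def FiberAdj (C : Set (Option K)) (x y : Option (K × γ)) : Prop :=
  x ≠ y ∧ fiberProj x ∈ C ∧ fiberProj y ∈ C ∧ (fiberProj x = fiberProj y → none ∈ C)

/-- A resolution of the derived design at `x` of a design over `C`. Its color set is `Option ι`, or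
just `ι` if `C` does not pass through infinity; if it does, the class of color `none` contains the
group blocks through `x`. -/
structure IsFiberResolvedAt (C : Set (Option K)) (B : Set (Set (Option (K × γ))))
    (x : Option (K × γ)) (P : Option ι → Set (Set (Option (K × γ)))) : Prop extends
    IsResolvedAt (FiberAdj C) {c | c = none → none ∈ C} B x P where
  groupBlock_mem_class : none ∈ C → ∀ ⦃u⦄, some u ∈ C → x ∈ groupBlock γ u → groupBlock γ u ∈ P none

/-- A design over `C` whose derived design at every point is resolved compatibly with the groups. -/
structure IsFiberDesign (ι : Type*) (C : Set (Option K)) (k : ℕ) (B : Set (Set (Option (K × γ)))) :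
    Prop where
  ncard_eq : ∀ ⦃b⦄, b ∈ B → b.ncard = k
  exists_isFiberResolvedAt : ∀ x, ∃ P : Option ι → Set (Set (Option (K × γ))),
    IsFiberResolvedAt C B x P

@[simp]
theorem fiberProj_eq_none {x : Option (K × γ)} : fiberProj x = none ↔ x = none :=
  Option.map_eq_none_iff

theorem fiberAdj_comm {C : Set (Option K)} {x y : Option (K × γ)} :
    FiberAdj C x y ↔ FiberAdj C y x := by
  grind [FiberAdj]

theorem exists_groupBlock_or_fiberAdj_iff_of_eq {x y z : Option (K × γ)} (hxy : x ≠ y)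
    (hxz : x ≠ z) (hyz : y ≠ z) (hproj : fiberProj x = fiberProj y) :
    (∃ u, x ∈ groupBlock γ u ∧ y ∈ groupBlock γ u ∧ z ∈ groupBlock γ u) ∨
      ∃ p q r : Option K, p ≠ q ∧ p ≠ r ∧ q ≠ r ∧ ∀ C : Set (Option K),
        FiberAdj C x y ∧ FiberAdj C x z ∧ FiberAdj C y z ↔ p ∈ C ∧ q ∈ C ∧ r ∈ C := by
  have proj_eq_none {w : Option (K × γ)} := fiberProj_eq_none (x := w)
  by_cases hz : fiberProj x = fiberProj z ∨ fiberProj z = none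
  · obtain ⟨u, hu⟩ := Option.ne_none_iff_exists'.1 (show fiberProj x ≠ none by grind)
    exact .inl ⟨u, by grind [groupBlock]⟩
  · exact .inr ⟨none, fiberProj x, fiberProj z, by grind [FiberAdj]⟩

theorem exists_groupBlock_or_fiberAdj_iff {x y z : Option (K × γ)} (hxy : x ≠ y) (hxz : x ≠ z)
    (hyz : y ≠ z) :
    (∃ u, x ∈ groupBlock γ u ∧ y ∈ groupBlock γ u ∧ z ∈ groupBlock γ u) ∨
      ∃ p q r : Option K, p ≠ q ∧ p ≠ r ∧ q ≠ r ∧ ∀ C : Set (Option K),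
        FiberAdj C x y ∧ FiberAdj C x z ∧ FiberAdj C y z ↔ p ∈ C ∧ q ∈ C ∧ r ∈ C := by
  by_cases h₁ : fiberProj x = fiberProj y
  · exact exists_groupBlock_or_fiberAdj_iff_of_eq hxy hxz hyz h₁
  by_cases h₂ : fiberProj x = fiberProj z
  · obtain ⟨u, hx, hz, hy⟩ | ⟨p, q, r, hpq, hpr, hqr, hadj⟩ :=
      exists_groupBlock_or_fiberAdj_iff_of_eq hxz hxy hyz.symm h₂
    · exact .inl ⟨u, hx, hy, hz⟩
    · exact .inr ⟨p, q, r, hpq, hpr, hqr, fun C => by grind [fiberAdj_comm]⟩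
  by_cases h₃ : fiberProj y = fiberProj z
  · obtain ⟨u, hy, hz, hx⟩ | ⟨p, q, r, hpq, hpr, hqr, hadj⟩ :=
      exists_groupBlock_or_fiberAdj_iff_of_eq hyz hxy.symm hxz.symm h₃
    · exact .inl ⟨u, hx, hy, hz⟩
    · exact .inr ⟨p, q, r, hpq, hpr, hqr, fun C => by grind [fiberAdj_comm]⟩
  · exact .inr ⟨fiberProj x, fiberProj y, fiberProj z, by grind [FiberAdj]⟩

theorem exists_fiberAdj_iff {x y : Option (K × γ)} (hxy : x ≠ y) :
    ∃ p ≠ fiberProj x, ∀ C, FiberAdj C x y ↔ fiberProj x ∈ C ∧ p ∈ C := by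
  have proj_eq_none {w : Option (K × γ)} := fiberProj_eq_none (x := w)
  by_cases hproj : fiberProj x = fiberProj y
  · exact ⟨none, by grind [FiberAdj]⟩
  · exact ⟨fiberProj y, by grind [FiberAdj]⟩

theorem fiberProj_ne_of_forall_notMem_groupBlock {x y : Option (K × γ)} (hxy : x ≠ y)
    (h : ¬ ∃ u, x ∈ groupBlock γ u ∧ y ∈ groupBlock γ u) :
    fiberProj x ≠ none ∧ fiberProj y ≠ none ∧ fiberProj x ≠ fiberProj y := by
  rcases x with - | ⟨u, i⟩ <;> rcases y with - | ⟨v, j⟩ <;>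
    simp_all [groupBlock, fiberProj, eq_comm]

namespace IsFiberDesign

variable {C : Set (Option K)} {k : ℕ} {B : Set (Set (Option (K × γ)))}

theorem fiberAdj_of_mem (h : IsFiberDesign ι C k B) {b : Set (Option (K × γ))} (hb : b ∈ B)
    {x y : Option (K × γ)} (hx : x ∈ b) (hy : y ∈ b) (hxy : x ≠ y) : FiberAdj C x y :=
  let ⟨_, hP⟩ := h.exists_isFiberResolvedAt x
  hP.adj_of_mem hb hx hy hxy

theorem fiberProj_mem (h : IsFiberDesign ι C k B) (hk : 2 ≤ k) {b : Set (Option (K × γ))}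
    (hb : b ∈ B) {x : Option (K × γ)} (hx : x ∈ b) : fiberProj x ∈ C := by
  obtain ⟨y, hy, hyx⟩ := Set.exists_ne_of_one_lt_ncard (s := b) (by rw [h.ncard_eq hb]; omega) x
  exact (h.fiberAdj_of_mem hb hx hy hyx.symm).2.1

theorem existsUnique_block (h : IsFiberDesign ι C k B) {x y z : Option (K × γ)}
    (hxy : FiberAdj C x y) (hxz : FiberAdj C x z) (hyz : FiberAdj C y z) :
    ∃! b, b ∈ B ∧ x ∈ b ∧ y ∈ b ∧ z ∈ b :=
  let ⟨_, hP⟩ := h.exists_isFiberResolvedAt x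
  hP.existsUnique_block hxy hxz hyz

theorem groupBlock_mem (h : IsFiberDesign ι C k B) (h_none : none ∈ C) {u : K} (hu : some u ∈ C) :
    groupBlock γ u ∈ B := by
  obtain ⟨P, hP⟩ := h.exists_isFiberResolvedAt none
  exact (hP.mem_of_mem_class (hP.groupBlock_mem_class h_none hu (.inl rfl))).2.1

theorem eq_groupBlock (h : IsFiberDesign ι C k B) {b : Set (Option (K × γ))} (hb : b ∈ B) {u : K}
    {x y z : Option (K × γ)} (hxy : x ≠ y) (hxz : x ≠ z) (hyz : y ≠ z)
    (hx : x ∈ b ∧ x ∈ groupBlock γ u) (hy : y ∈ b ∧ y ∈ groupBlock γ u)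
    (hz : z ∈ b ∧ z ∈ groupBlock γ u) : none ∈ C ∧ some u ∈ C ∧ b = groupBlock γ u := by
  have adj_xy := h.fiberAdj_of_mem hb hx.1 hy.1 hxy
  have adj_xz := h.fiberAdj_of_mem hb hx.1 hz.1 hxz
  have adj_yz := h.fiberAdj_of_mem hb hy.1 hz.1 hyz
  have mem_C : none ∈ C ∧ some u ∈ C := by grind [FiberAdj, groupBlock, fiberProj_eq_none]
  exact ⟨mem_C.1, mem_C.2, (h.existsUnique_block adj_xy adj_xz adj_yz).unique
    ⟨hb, hx.1, hy.1, hz.1⟩ ⟨h.groupBlock_mem mem_C.1 mem_C.2, hx.2, hy.2, hz.2⟩⟩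

end IsFiberDesign

/-- The union of a family of block systems over the members of `𝒞`. -/
def fiberBlocks (𝒞 : Set (Set (Option K))) (B : Set (Option K) → Set (Set (Option (K × γ)))) :
    Set (Set (Option (K × γ))) :=
  {b | ∃ C ∈ 𝒞, b ∈ B C}

/-- The classes at a point of the union of a family of designs: `R` resolves the base design `𝒞` at
the image of the point and `Q C` resolves the design over `C`. -/
def fiberClass (𝒞 : Set (Set (Option K))) (R : D → Set (Set (Option K)))
    (Q : Set (Option K) → Option ι → Set (Set (Option (K × γ)))) :
    Option (D × ι) → Set (Set (Option (K × γ)))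
  | none => {b | ∃ C ∈ 𝒞, none ∈ C ∧ b ∈ Q C none}
  | some (d, i) => {b | ∃ C ∈ R d, b ∈ Q C (some i)}

section Union

variable {m k : ℕ} {𝒞 : Set (Set (Option K))} {B : Set (Option K) → Set (Set (Option (K × γ)))}

theorem existsUnique_mem_fiberBlocks [Nonempty D]
    (h𝒞 : IsResolvedDesign (· ≠ ·) m (Set.univ : Set D) 𝒞)
    (hB : ∀ C ∈ 𝒞, IsFiberDesign ι C k (B C)) {x y z : Option (K × γ)} (hxy : x ≠ y) (hxz : x ≠ z)
    (hyz : y ≠ z) : ∃! b, b ∈ fiberBlocks 𝒞 B ∧ x ∈ b ∧ y ∈ b ∧ z ∈ b := by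
  obtain ⟨u, hx, hy, hz⟩ | ⟨p, q, r, hpq, hpr, hqr, hadj⟩ :=
    exists_groupBlock_or_fiberAdj_iff hxy hxz hyz
  · obtain ⟨C, hC, h_none, hu⟩ := h𝒞.exists_mem_of_adj (Option.some_ne_none u).symm
    refine ⟨groupBlock γ u, ⟨⟨C, hC, (hB C hC).groupBlock_mem h_none hu⟩, hx, hy, hz⟩, ?_⟩
    rintro b ⟨⟨C', hC', hb⟩, hxb, hyb, hzb⟩
    exact ((hB C' hC').eq_groupBlock hb hxy hxz hyz ⟨hxb, hx⟩ ⟨hyb, hy⟩ ⟨hzb, hz⟩).2.2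
  · obtain ⟨C, ⟨hC, hmem⟩, hC_unique⟩ := h𝒞.existsUnique_mem hpq hpr hqr
    obtain ⟨adj_xy, adj_xz, adj_yz⟩ := (hadj C).2 hmem
    obtain ⟨b, ⟨hb, hmem_b⟩, hb_unique⟩ := (hB C hC).existsUnique_block adj_xy adj_xz adj_yz
    refine ⟨b, ⟨⟨C, hC, hb⟩, hmem_b⟩, ?_⟩
    rintro b' ⟨⟨C', hC', hb'⟩, hx, hy, hz⟩
    have adj' {v w : Option (K × γ)} := (hB C' hC').fiberAdj_of_mem hb' (x := v) (y := w)
    obtain rfl := hC_unique C'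
      ⟨hC', (hadj C').1 ⟨adj' hx hy hxy, adj' hx hz hxz, adj' hy hz hyz⟩⟩
    exact hb_unique b' ⟨hb', hx, hy, hz⟩

theorem eq_or_exists_eq_groupBlock (hk : 3 ≤ k)
    (h𝒞 : IsResolvedDesign (· ≠ ·) m (Set.univ : Set D) 𝒞)
    (hB : ∀ C ∈ 𝒞, IsFiberDesign ι C k (B C)) {C C' : Set (Option K)} (hC : C ∈ 𝒞) (hC' : C' ∈ 𝒞)
    {b : Set (Option (K × γ))} (hb : b ∈ B C) (hb' : b ∈ B C') :
    C = C' ∨ ∃ u, (none ∈ C ∧ some u ∈ C) ∧ (none ∈ C' ∧ some u ∈ C') ∧ b = groupBlock γ u := by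
  have two_lt : 2 < b.ncard := by rw [(hB C hC).ncard_eq hb]; exact hk
  obtain ⟨x, y, z, hx, hy, hz, hxy, hxz, hyz⟩ :=
    (Set.two_lt_ncard_iff (Set.finite_of_ncard_pos (by omega))).1 two_lt
  obtain ⟨u, hxu, hyu, hzu⟩ | ⟨p, q, r, hpq, hpr, hqr, hadj⟩ :=
    exists_groupBlock_or_fiberAdj_iff hxy hxz hyz
  · have h := (hB C hC).eq_groupBlock hb hxy hxz hyz ⟨hx, hxu⟩ ⟨hy, hyu⟩ ⟨hz, hzu⟩
    have h' := (hB C' hC').eq_groupBlock hb' hxy hxz hyz ⟨hx, hxu⟩ ⟨hy, hyu⟩ ⟨hz, hzu⟩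
    exact .inr ⟨u, ⟨h.1, h.2.1⟩, ⟨h'.1, h'.2.1⟩, h.2.2⟩
  · have mem {C : Set (Option K)} (hC : C ∈ 𝒞) (hb : b ∈ B C) : p ∈ C ∧ q ∈ C ∧ r ∈ C :=
      (hadj C).1 ⟨(hB C hC).fiberAdj_of_mem hb hx hy hxy, (hB C hC).fiberAdj_of_mem hb hx hz hxz,
        (hB C hC).fiberAdj_of_mem hb hy hz hyz⟩
    exact .inl ((h𝒞.existsUnique_mem hpq hpr hqr).unique ⟨hC, mem hC hb⟩ ⟨hC', mem hC' hb'⟩)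

variable {x : Option (K × γ)} {R : D → Set (Set (Option K))}
  {Q : Set (Option K) → Option ι → Set (Set (Option (K × γ)))}

theorem existsUnique_mem_fiberClass_some
    (hR : IsResolvedAt (· ≠ ·) Set.univ 𝒞 (fiberProj x) R)
    (hQ : ∀ C ∈ 𝒞, IsFiberResolvedAt C (B C) x (Q C)) (d : D) (i : ι) {y : Option (K × γ)}
    (hxy : x ≠ y) : ∃! b, b ∈ fiberClass 𝒞 R Q (some (d, i)) ∧ y ∈ b := by
  obtain ⟨p, hp, hadj⟩ := exists_fiberAdj_iff hxy
  obtain ⟨C, ⟨hC, hpC⟩, hC_unique⟩ := hR.existsUnique_mem_class (Set.mem_univ d) hp.symm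
  obtain ⟨-, hC𝒞, hxC⟩ := hR.mem_of_mem_class hC
  obtain ⟨b, ⟨hb, hyb⟩, hb_unique⟩ := (hQ C hC𝒞).existsUnique_mem_class
    (i := some i) (by simp) ((hadj C).2 ⟨hxC, hpC⟩)
  refine ⟨b, ⟨⟨C, hC, hb⟩, hyb⟩, ?_⟩
  rintro b' ⟨⟨C', hC', hb'⟩, hyb'⟩
  have hC'𝒞 := (hR.mem_of_mem_class hC').2.1
  obtain ⟨-, hb'B, hxb'⟩ := (hQ C' hC'𝒞).mem_of_mem_class hb'
  obtain rfl := hC_unique C'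
    ⟨hC', ((hadj C').1 ((hQ C' hC'𝒞).adj_of_mem hb'B hxb' hyb' hxy)).2⟩
  exact hb_unique b' ⟨hb', hyb'⟩

theorem existsUnique_mem_fiberClass_none [Nonempty D]
    (h𝒞 : IsResolvedDesign (· ≠ ·) m (Set.univ : Set D) 𝒞)
    (hQ : ∀ C ∈ 𝒞, IsFiberResolvedAt C (B C) x (Q C)) {y : Option (K × γ)} (hxy : x ≠ y) :
    ∃! b, b ∈ fiberClass 𝒞 R Q none ∧ y ∈ b := by
  have adj_of_mem {C : Set (Option K)} (hC : C ∈ 𝒞) {b : Set (Option (K × γ))} (hb : b ∈ Q C none)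
      (hy : y ∈ b) : FiberAdj C x y :=
    have hbB := (hQ C hC).mem_of_mem_class hb
    (hQ C hC).adj_of_mem hbB.2.1 hbB.2.2 hy hxy
  by_cases hgroup : ∃ u, x ∈ groupBlock γ u ∧ y ∈ groupBlock γ u
  · obtain ⟨u, hx, hy⟩ := hgroup
    obtain ⟨C, hC, h_none, hu⟩ := h𝒞.exists_mem_of_adj (Option.some_ne_none u).symm
    refine ⟨groupBlock γ u,
      ⟨⟨C, hC, h_none, (hQ C hC).groupBlock_mem_class h_none hu hx⟩, hy⟩, ?_⟩
    rintro b ⟨⟨C', hC', h_none', hb⟩, hyb⟩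
    have hadj := adj_of_mem hC' hb hyb
    have hu' : some u ∈ C' := by grind [FiberAdj, groupBlock, fiberProj_eq_none]
    exact ((hQ C' hC').existsUnique_mem_class (fun _ => h_none') hadj).unique ⟨hb, hyb⟩
      ⟨(hQ C' hC').groupBlock_mem_class h_none' hu' hx, hy⟩
  · have hproj := fiberProj_ne_of_forall_notMem_groupBlock hxy hgroup
    obtain ⟨C, ⟨hC, h_none, hxC, hyC⟩, hC_unique⟩ := h𝒞.existsUnique_mem
      hproj.1.symm hproj.2.1.symm hproj.2.2
    obtain ⟨b, ⟨hb, hyb⟩, hb_unique⟩ := (hQ C hC).existsUnique_mem_class (i := none)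
      (fun _ => h_none) ⟨hxy, hxC, hyC, fun _ => h_none⟩
    refine ⟨b, ⟨⟨C, hC, h_none, hb⟩, hyb⟩, ?_⟩
    rintro b' ⟨⟨C', hC', h_none', hb'⟩, hyb'⟩
    have hadj := adj_of_mem hC' hb' hyb'
    obtain rfl := hC_unique C' ⟨hC', h_none', hadj.2.1, hadj.2.2.1⟩
    exact hb_unique b' ⟨hb', hyb'⟩

theorem color_eq_none_or_eq (hk : 3 ≤ k) (h𝒞 : IsResolvedDesign (· ≠ ·) m (Set.univ : Set D) 𝒞)
    (hB : ∀ C ∈ 𝒞, IsFiberDesign ι C k (B C)) (hQ : ∀ C ∈ 𝒞, IsFiberResolvedAt C (B C) x (Q C))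
    {C C' : Set (Option K)} (hC : C ∈ 𝒞) (hC' : C' ∈ 𝒞) {b : Set (Option (K × γ))}
    {c c' : Option ι} (hb : b ∈ Q C c) (hb' : b ∈ Q C' c') :
    (c = none ∧ c' = none) ∨ (C = C' ∧ c = c') := by
  obtain ⟨-, hbB, hx⟩ := (hQ C hC).mem_of_mem_class hb
  obtain ⟨-, hbB', -⟩ := (hQ C' hC').mem_of_mem_class hb'
  obtain rfl | ⟨u, hCu, hCu', rfl⟩ := eq_or_exists_eq_groupBlock hk h𝒞 hB hC hC' hbB hbB'
  · exact .inr ⟨rfl, ((hQ C hC).existsUnique_color hbB hx).unique hb hb'⟩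
  · exact .inl ⟨((hQ C hC).existsUnique_color hbB hx).unique hb
        ((hQ C hC).groupBlock_mem_class hCu.1 hCu.2 hx),
      ((hQ C' hC').existsUnique_color hbB' hx).unique hb'
        ((hQ C' hC').groupBlock_mem_class hCu'.1 hCu'.2 hx)⟩

theorem existsUnique_mem_fiberClass (hk : 3 ≤ k)
    (h𝒞 : IsResolvedDesign (· ≠ ·) m (Set.univ : Set D) 𝒞)
    (hB : ∀ C ∈ 𝒞, IsFiberDesign ι C k (B C)) (hR : IsResolvedAt (· ≠ ·) Set.univ 𝒞 (fiberProj x) R)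
    (hQ : ∀ C ∈ 𝒞, IsFiberResolvedAt C (B C) x (Q C)) {b : Set (Option (K × γ))}
    (hb : b ∈ fiberBlocks 𝒞 B) (hx : x ∈ b) : ∃! c, b ∈ fiberClass 𝒞 R Q c := by
  obtain ⟨C, hC, hbC⟩ := hb
  obtain ⟨c, hc, -⟩ := (hQ C hC).existsUnique_color hbC hx
  have color_eq {C' : Set (Option K)} (hC' : C' ∈ 𝒞) {c' : Option ι} (hb' : b ∈ Q C' c') :=
    color_eq_none_or_eq hk h𝒞 hB hQ hC hC' hc hb'
  rcases c with - | i
  · refine ⟨none, ⟨C, hC, ((hQ C hC).mem_of_mem_class hc).1 rfl, hc⟩, ?_⟩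
    rintro (- | ⟨d', i'⟩) hb'
    · rfl
    · obtain ⟨C', hC', hb'⟩ := hb'
      simpa using color_eq (hR.mem_of_mem_class hC').2.1 hb'
  · obtain ⟨d, hd, hd_unique⟩ :=
      hR.existsUnique_color hC ((hB C hC).fiberProj_mem (by omega) hbC hx)
    refine ⟨some (d, i), ⟨C, hd, hc⟩, ?_⟩
    rintro (- | ⟨d', i'⟩) hb'
    · obtain ⟨C', hC', -, hb'⟩ := hb'
      simpa using color_eq hC' hb'
    · obtain ⟨C', hC', hb'⟩ := hb'
      obtain ⟨rfl, rfl⟩ : C = C' ∧ i = i' := by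
        simpa using color_eq (hR.mem_of_mem_class hC').2.1 hb'
      rw [hd_unique d' hC']

theorem IsResolvedDesign.fiberBlocks [Nonempty D] (hk : 3 ≤ k)
    (h𝒞 : IsResolvedDesign (· ≠ ·) m (Set.univ : Set D) 𝒞)
    (hB : ∀ C ∈ 𝒞, IsFiberDesign ι C k (B C)) :
    IsResolvedDesign (· ≠ ·) k (Set.univ : Set (Option (D × ι))) (fiberBlocks 𝒞 B) where
  ncard_eq := fun b ⟨C, hC, hb⟩ => (hB C hC).ncard_eq hb
  exists_isResolvedAt x := by
    obtain ⟨R, hR⟩ := h𝒞.exists_isResolvedAt (fiberProj x)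
    choose! Q hQ using fun C hC => (hB C hC).exists_isFiberResolvedAt x
    refine ⟨fiberClass 𝒞 R Q, fun _ _ _ _ _ hxy => hxy,
      fun _ _ => existsUnique_mem_fiberBlocks h𝒞 hB, ?_,
      fun _ => existsUnique_mem_fiberClass hk h𝒞 hB hR hQ, ?_⟩
    · rintro (- | ⟨d, i⟩) b hb
      · obtain ⟨C, hC, -, hb⟩ := hb
        obtain ⟨-, hbB, hx⟩ := (hQ C hC).mem_of_mem_class hb
        exact ⟨trivial, ⟨C, hC, hbB⟩, hx⟩
      · obtain ⟨C, hC, hb⟩ := hb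
        have hC𝒞 := (hR.mem_of_mem_class hC).2.1
        obtain ⟨-, hbB, hx⟩ := (hQ C hC𝒞).mem_of_mem_class hb
        exact ⟨trivial, ⟨C, hC𝒞, hbB⟩, hx⟩
    · rintro (- | ⟨d, i⟩) - y hxy
      · exact existsUnique_mem_fiberClass_none h𝒞 hQ hxy
      · exact existsUnique_mem_fiberClass_some hR hQ d i hxy

end Union

end FiberDesign

section FiberMap

variable {K U γ : Type*}

theorem some_mem_image_optionMap {e : U → K} {C : Set (Option U)} {v : K} :
    some v ∈ Option.map e '' C ↔ ∃ u, some u ∈ C ∧ e u = v := by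
  simp [Option.exists]

/-- The map of points induced by a map `e` of groups. -/
def fiberMap (γ : Type*) (e : U → K) : Option (U × γ) → Option (K × γ) := Option.map (Prod.map e id)

theorem fiberMap_injective {e : U → K} (he : Function.Injective e) :
    Function.Injective (fiberMap γ e) :=
  Option.map_injective (he.prodMap Function.injective_id)

theorem fiberProj_fiberMap (e : U → K) (x : Option (U × γ)) :
    fiberProj (fiberMap γ e x) = Option.map e (fiberProj x) := by
  cases x <;> rfl

theorem exists_fiberMap_eq {e : U → K} {C : Set (Option U)} {y : Option (K × γ)}
    (hy : fiberProj y ∈ Option.map e '' C) : ∃ x, fiberProj x ∈ C ∧ fiberMap γ e x = y := by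
  obtain ⟨p, hp, hpy⟩ := hy
  rcases p with - | u <;> rcases y with - | ⟨v, j⟩
  · exact ⟨none, hp, rfl⟩
  · exact nomatch hpy
  · exact nomatch hpy
  · obtain rfl : e u = v := Option.some.inj hpy
    exact ⟨some (u, j), hp, rfl⟩

theorem image_fiberMap_groupBlock (e : U → K) (u : U) :
    fiberMap γ e '' groupBlock γ u = groupBlock γ (e u) := by
  refine subset_antisymm (Set.image_subset_iff.2 fun x hx => ?_) fun y hy => ?_
  · rw [Set.mem_preimage, groupBlock, Set.mem_preimage, fiberProj_fiberMap]
    exact hx.imp (congrArg (Option.map e)) (congrArg (Option.map e))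
  · refine (exists_fiberMap_eq (C := {none, some u}) ?_).imp fun _ => id
    rw [Set.image_pair]
    exact hy

theorem relationMap_fiberAdj {e : U → K} (he : Function.Injective e) (C : Set (Option U)) :
    Relation.Map (FiberAdj C) (fiberMap γ e) (fiberMap γ e) = FiberAdj (Option.map e '' C) := by
  have hmap := Option.map_injective he
  have fiberAdj_iff (x y : Option (U × γ)) : FiberAdj C x y ↔
      FiberAdj (Option.map e '' C) (fiberMap γ e x) (fiberMap γ e y) := by
    simp only [FiberAdj, fiberProj_fiberMap, (fiberMap_injective he).ne_iff, hmap.eq_iff,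
      hmap.mem_set_image, ← Option.map_none (f := e)]
  ext x y
  constructor
  · rintro ⟨x, y, hxy, rfl, rfl⟩
    exact (fiberAdj_iff x y).1 hxy
  · intro hxy
    obtain ⟨x, -, rfl⟩ := exists_fiberMap_eq hxy.2.1
    obtain ⟨y, -, rfl⟩ := exists_fiberMap_eq hxy.2.2.1
    exact ⟨x, y, (fiberAdj_iff x y).2 hxy, rfl, rfl⟩

theorem IsFiberResolvedAt.image {C : Set (Option U)} {B : Set (Set (Option (U × γ)))}
    {x : Option (U × γ)} {P : Option ι → Set (Set (Option (U × γ)))}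
    (h : IsFiberResolvedAt C B x P) {e : U → K} (he : Function.Injective e) :
    IsFiberResolvedAt (Option.map e '' C) ((fiberMap γ e '' ·) '' B) (fiberMap γ e x)
      fun c => (fiberMap γ e '' ·) '' P c where
  toIsResolvedAt := by
    have := h.toIsResolvedAt.image (fiberMap_injective he)
    rw [relationMap_fiberAdj he] at this
    simpa using this
  groupBlock_mem_class := by
    intro h_none v hv hx
    obtain ⟨u, hu, rfl⟩ := some_mem_image_optionMap.1 hv
    rw [← image_fiberMap_groupBlock, (fiberMap_injective he).mem_set_image] at hx
    rw [← image_fiberMap_groupBlock]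
    exact Set.mem_image_of_mem _ (h.groupBlock_mem_class (by simpa using h_none) hu hx)

theorem IsFiberDesign.image {C : Set (Option U)} {k : ℕ} {B : Set (Set (Option (U × γ)))}
    (h : IsFiberDesign ι C k B) {e : U → K} (he : Function.Injective e) :
    IsFiberDesign ι (Option.map e '' C) k ((fiberMap γ e '' ·) '' B) where
  ncard_eq := by
    rintro _ ⟨b, hb, rfl⟩
    exact (Set.ncard_image_of_injective b (fiberMap_injective he)).trans (h.ncard_eq hb)
  exists_isFiberResolvedAt y := by
    by_cases hy : y ∈ Set.range (fiberMap γ e)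
    · obtain ⟨x, rfl⟩ := hy
      obtain ⟨P, hP⟩ := h.exists_isFiberResolvedAt x
      exact ⟨_, hP.image he⟩
    · have := isResolvedAt_empty_of_notMem_range (FiberAdj C) {c : Option ι | c = none → none ∈ C}
        B hy
      rw [relationMap_fiberAdj he] at this
      refine ⟨_, by simpa using this, fun _ v hv hyv => (hy ?_).elim⟩
      obtain ⟨u, -, rfl⟩ := some_mem_image_optionMap.1 hv
      exact Set.image_subset_range _ _ (image_fiberMap_groupBlock e u ▸ hyv)

end FiberMap

section ExistsFiberDesign

variable {K U γ : Type*}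

theorem relationMap_some_fst_ne :
    Relation.Map (fun x y : U × γ => x.1 ≠ y.1) some some = FiberAdj (Set.range some) := by
  ext (- | x) (- | y) <;> simp [Relation.Map, FiberAdj, fiberProj]
  grind

theorem IsResolvedDesign.isFiberDesign_range_some {k : ℕ} {B : Set (Set (U × γ))}
    (h : IsResolvedDesign (fun x y => x.1 ≠ y.1) k (Set.univ : Set ι) B) :
    IsFiberDesign ι (Set.range (some : U → Option U)) k ((some '' ·) '' B) := by
  have h' := (h.image (Option.some_injective _)).image_colors (Option.some_injective ι)
  refine ⟨h'.ncard_eq, fun x => ?_⟩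
  obtain ⟨P, hP⟩ := h'.exists_isResolvedAt x
  have colors_eq : some '' (Set.univ : Set ι) =
      {c | c = none → none ∈ Set.range (some : U → Option U)} := by
    ext (- | i) <;> simp
  rw [relationMap_some_fst_ne, colors_eq] at hP
  exact ⟨P, hP, by simp⟩

theorem fiberAdj_univ : FiberAdj (K := K) (γ := γ) Set.univ = (· ≠ ·) := by
  ext x y
  simp [FiberAdj]

theorem IsResolvedDesign.isFiberDesign_univ {k : ℕ} {B : Set (Set (Option (U × γ)))}
    (h : IsResolvedDesign (· ≠ ·) k (Set.univ : Set (Option ι)) B)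
    {P₀ : Option ι → Set (Set (Option (U × γ)))}
    (hP₀ : IsResolvedAt (· ≠ ·) Set.univ B none P₀) (hgroup : ∀ u, groupBlock γ u ∈ P₀ none) :
    IsFiberDesign ι Set.univ k B := by
  classical
  refine ⟨h.ncard_eq, ?_⟩
  rintro (- | ⟨u, j⟩)
  · exact ⟨P₀, by simpa [fiberAdj_univ] using hP₀, fun _ v _ _ => hgroup v⟩
  · obtain ⟨P, hP⟩ := h.exists_isResolvedAt (some (u, j))
    obtain ⟨c, hc, -⟩ := hP.existsUnique_color (hP₀.mem_of_mem_class (hgroup u)).2.1 (.inr rfl)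
    -- Exchanging `c` and `none` gives the group block through the point the color `none`.
    refine ⟨_, by simpa [fiberAdj_univ] using hP.image_colors (Equiv.swap c none).injective, ?_⟩
    intro _ v _ hv
    obtain rfl : u = v := by simpa [groupBlock, fiberProj] using hv
    exact ⟨c, Equiv.swap_apply_left c none, hc⟩

theorem exists_injective_range_eq [Finite V] [Finite W] {S : Set W} (hS : S.ncard = Nat.card V) :
    ∃ f : V → W, Function.Injective f ∧ Set.range f = S := by
  obtain ⟨e⟩ : Nonempty (V ≃ S) := Finite.card_eq.1 (by rw [← hS, Nat.card_coe_set_eq])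
  exact ⟨_, Subtype.val_injective.comp e.injective, by simp [Set.range_comp]⟩

theorem groupBlock_eq_insert (u : U) :
    groupBlock γ u = insert none (Set.range fun j => some (u, j)) := by
  ext (- | ⟨v, j⟩) <;> simp [groupBlock, fiberProj, eq_comm]

theorem IsResolvedAt.exists_equiv_image_groupBlock [Finite V] [Finite γ] {B : Set (Set V)} {x : V}
    {P : ι → Set (Set V)} (h : IsResolvedAt (· ≠ ·) Set.univ B x P)
    (hB : ∀ b ∈ B, b.ncard = Nat.card γ + 1) (i : ι) :
    ∃ e : Option (P i × γ) ≃ V, e none = x ∧ ∀ b : P i, e '' groupBlock γ b = b := by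
  have mem (b : P i) : x ∈ (b : Set V) := (h.mem_of_mem_class b.2).2.2
  have ncard_eq (b : P i) : ((b : Set V) \ {x}).ncard = Nat.card γ := by
    rw [Set.ncard_sdiff_singleton_of_mem (mem b), hB b (h.mem_of_mem_class b.2).2.1,
      Nat.add_sub_cancel]
  choose f f_injective range_f using fun b => exists_injective_range_eq (ncard_eq b)
  have f_mem (b : P i) (j : γ) : f b j ∈ (b : Set V) \ {x} := range_f b ▸ Set.mem_range_self j
  let g : Option (P i × γ) → V := fun p => p.elim x fun q => f q.1 q.2
  have g_injective : Function.Injective g := by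
    rintro (- | ⟨b, j⟩) (- | ⟨b', j'⟩) hg
    · rfl
    · exact ((f_mem b' j').2 hg.symm).elim
    · exact ((f_mem b j).2 hg).elim
    · replace hg : f b j = f b' j' := hg
      obtain rfl : b = b' := Subtype.ext <|
        (h.existsUnique_mem_class (Set.mem_univ i) (Ne.symm (f_mem b j).2)).unique
          ⟨b.2, (f_mem b j).1⟩ ⟨b'.2, hg ▸ (f_mem b' j').1⟩
      rw [f_injective b hg]
  have g_surjective : Function.Surjective g := fun y => by
    by_cases hyx : y = x
    · exact ⟨none, hyx.symm⟩
    · obtain ⟨b, ⟨hb, hy⟩, -⟩ := h.existsUnique_mem_class (Set.mem_univ i) (Ne.symm hyx)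
      obtain ⟨j, hj⟩ : y ∈ Set.range (f ⟨b, hb⟩) := range_f ⟨b, hb⟩ ▸ ⟨hy, hyx⟩
      exact ⟨some (⟨b, hb⟩, j), hj⟩
  refine ⟨Equiv.ofBijective g ⟨g_injective, g_surjective⟩, rfl, fun b => ?_⟩
  calc g '' groupBlock γ b = insert x (Set.range (f b)) := by
        rw [groupBlock_eq_insert, Set.image_insert_eq, ← Set.range_comp]; rfl
    _ = b := by rw [range_f, Set.insert_sdiff_singleton, Set.insert_eq_of_mem (mem b)]

theorem IsResolvedDesign.exists_isFiberDesign_univ [Finite V] [Nonempty V] [Finite γ]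
    {B : Set (Set V)}
    (h : IsResolvedDesign (· ≠ ·) (Nat.card γ + 1) (Set.univ : Set (Option ι)) B) :
    ∃ (𝒢 : Set (Set V)) (B' : Set (Set (Option (𝒢 × γ)))),
      Nonempty (Option (𝒢 × γ) ≃ V) ∧ IsFiberDesign ι Set.univ (Nat.card γ + 1) B' := by
  obtain ⟨P, hP⟩ := h.exists_isResolvedAt (Classical.arbitrary V)
  obtain ⟨e, he, hgroup⟩ := hP.exists_equiv_image_groupBlock (γ := γ) (fun _ => @h.ncard_eq _) none
  have relationMap_ne : Relation.Map (fun x y : V => x ≠ y) e.symm e.symm = (· ≠ ·) :=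
    relationMap_equiv e.symm fun _ _ => e.symm.injective.ne_iff.symm
  have hP' := hP.image e.symm.injective
  have h' := h.image e.symm.injective
  rw [relationMap_ne] at h' hP'
  rw [← he, e.symm_apply_apply] at hP'
  exact ⟨_, _, ⟨e⟩, h'.isFiberDesign_univ hP' fun u =>
    ⟨u, u.2, by simp only [← hgroup u, e.symm_image_image]⟩⟩

theorem IsFiberDesign.exists_of_none_notMem [Finite U] [Finite K] {k : ℕ}
    {B : Set (Set (Option (U × γ)))} (h : IsFiberDesign ι (Set.range some) k B)
    {C : Set (Option K)} (hC : C.ncard = Nat.card U) (h_none : none ∉ C) :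
    ∃ B' : Set (Set (Option (K × γ))), IsFiberDesign ι C k B' := by
  have C_eq : some '' (some ⁻¹' C) = C :=
    Set.image_preimage_eq_of_subset fun p hp =>
      Option.ne_none_iff_exists.1 fun hp_none => h_none (hp_none ▸ hp)
  rw [← C_eq, Set.ncard_image_of_injective _ (Option.some_injective K)] at hC
  obtain ⟨e, he, hrange⟩ := exists_injective_range_eq hC
  have image_eq : Option.map e '' Set.range some = C := by
    rw [← C_eq, ← hrange, ← Set.range_comp, ← Set.range_comp]; rfl
  exact ⟨_, image_eq ▸ h.image he⟩

theorem IsFiberDesign.exists_of_none_mem [Finite U] [Finite K] {k : ℕ}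
    {B : Set (Set (Option (U × γ)))} (h : IsFiberDesign ι Set.univ k B)
    {C : Set (Option K)} (hC : C.ncard = Nat.card U + 1) (h_none : none ∈ C) :
    ∃ B' : Set (Set (Option (K × γ))), IsFiberDesign ι C k B' := by
  have C_eq : insert none (some '' (some ⁻¹' C)) = C := by
    ext (- | v) <;> simp [h_none]
  rw [← C_eq, Set.ncard_insert_of_notMem (by simp),
    Set.ncard_image_of_injective _ (Option.some_injective K), Nat.add_right_cancel_iff] at hC
  obtain ⟨e, he, hrange⟩ := exists_injective_range_eq hC
  have image_eq : Option.map e '' Set.univ = C := by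
    rw [← C_eq, ← hrange, ← Set.range_comp, Set.image_univ, Option.range_eq]; rfl
  exact ⟨_, image_eq ▸ h.image he⟩

end ExistsFiberDesign

section Circles

open scoped OnePoint Pointwise LinearAlgebra.Projectivization MatrixGroups

variable (F K : Type*) [Field F] [Field K] [Algebra F K]

/-- The circles of the inversive geometry of `K` over `F`: the images of the projective line over
`F` under the fractional linear transformations of the projective line over `K`. -/
def circles [DecidableEq K] : Set (Set (OnePoint K)) :=
  MulAction.orbit (GL (Fin 2) K) (Set.range (OnePoint.map (algebraMap F K)))

variable {F K}

/-- The affine line through `b` with direction `d`, completed by the point at infinity. -/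
def projectiveLine (d : ℙ F K) (b : K) : Set (OnePoint K) :=
  insert ∞ ((↑) '' {z : K | z - b ∈ d.submodule})

theorem infty_mem_projectiveLine (d : ℙ F K) (b : K) : ∞ ∈ projectiveLine d b :=
  Set.mem_insert _ _

@[simp]
theorem coe_mem_projectiveLine {d : ℙ F K} {b z : K} :
    (z : OnePoint K) ∈ projectiveLine d b ↔ z - b ∈ d.submodule := by
  simp [projectiveLine]

theorem projectiveLine_eq_of_mem {d : ℙ F K} {b z : K}
    (hz : (z : OnePoint K) ∈ projectiveLine d b) : projectiveLine d b = projectiveLine d z := by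
  rw [coe_mem_projectiveLine] at hz
  have sub_mem_iff (w : K) : w - b ∈ d.submodule ↔ w - z ∈ d.submodule := by
    rw [← sub_add_sub_cancel w z b, Submodule.add_mem_iff_left _ hz]
  simp only [projectiveLine, sub_mem_iff]

theorem direction_eq_of_projectiveLine_eq {d d' : ℙ F K} {b b' : K}
    (h : projectiveLine d b = projectiveLine d' b') : d = d' := by
  have hb : (b : OnePoint K) ∈ projectiveLine d' b' := by
    simp [← h]
  rw [projectiveLine_eq_of_mem hb] at h
  refine Projectivization.submodule_injective (Submodule.ext fun v => ?_)
  have := congrArg (((b + v : K) : OnePoint K) ∈ ·) h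
  simpa using this

theorem direction_eq_mk_sub {d : ℙ F K} {y z : K} (hyz : y ≠ z)
    (hz : (z : OnePoint K) ∈ projectiveLine d y) :
    d = .mk F (z - y) (sub_ne_zero.2 hyz.symm) := by
  rw [coe_mem_projectiveLine] at hz
  induction d using Projectivization.ind with | h v hv =>
  rw [Projectivization.submodule_mk, Submodule.mem_span_singleton] at hz
  exact ((Projectivization.mk_eq_mk_iff' F _ _ _ hv).2 hz).symm

variable [DecidableEq K]

theorem ncard_of_mem_circles [Finite F] {C : Set (OnePoint K)} (hC : C ∈ circles F K) :
    C.ncard = Nat.card F + 1 := by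
  obtain ⟨g, rfl⟩ := hC
  have map_injective : Function.Injective (OnePoint.map (algebraMap F K)) :=
    Option.map_injective (algebraMap F K).injective
  rw [Set.ncard_smul_set, Set.ncard_range_of_injective map_injective]
  exact Finite.card_option

theorem map_smul_range_map (h : GL (Fin 2) F) :
    h.map (algebraMap F K) • Set.range (OnePoint.map (algebraMap F K)) =
      Set.range (OnePoint.map (algebraMap F K)) := by
  classical
  rw [← Set.image_smul, ← Set.range_comp]
  simp only [Function.comp_def, ← OnePoint.map_smul]
  exact (MulAction.surjective h).range_comp _

theorem smul_range_map_eq_projectiveLine {g : GL (Fin 2) K} (hg : g 1 0 = 0)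
    (hslope : g 0 0 / g 1 1 ≠ 0) :
    g • Set.range (OnePoint.map (algebraMap F K)) =
      projectiveLine (.mk F (g 0 0 / g 1 1) hslope) (g 0 1 / g 1 1) := by
  have hg₁₁ : g 1 1 ≠ 0 := fun h => hslope (by rw [h, div_zero])
  have smul_coe (z : K) : g • (z : OnePoint K) = ↑(z * (g 0 0 / g 1 1) + g 0 1 / g 1 1) := by
    rw [OnePoint.smul_some_eq_ite, hg, zero_mul, zero_add, if_neg hg₁₁]
    congr 1
    ring
  ext x
  rw [← Set.image_smul, ← Set.range_comp]
  induction x with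
  | infty =>
    exact iff_of_true ⟨∞, OnePoint.smul_infty_eq_self_iff.2 hg⟩ (infty_mem_projectiveLine _ _)
  | coe z =>
    rw [coe_mem_projectiveLine, Projectivization.submodule_mk, Submodule.mem_span_singleton]
    simp [OnePoint.exists, smul_coe, OnePoint.smul_infty_eq_self_iff.2 hg, Algebra.smul_def,
      eq_sub_iff_add_eq]

theorem exists_smul_range_map_eq_of_infty_mem {g : GL (Fin 2) K}
    (h : ∞ ∈ g • Set.range (OnePoint.map (algebraMap F K))) :
    ∃ g' : GL (Fin 2) K, g' • (∞ : OnePoint K) = ∞ ∧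
      g • Set.range (OnePoint.map (algebraMap F K)) =
        g' • Set.range (OnePoint.map (algebraMap F K)) := by
  classical
  obtain ⟨_, ⟨t, rfl⟩, ht⟩ := h
  obtain ⟨h, rfl⟩ := OnePoint.exists_mem_SL2 F t
  rw [OnePoint.map_smul, OnePoint.map_infty] at ht
  exact ⟨_, (mul_smul _ _ _).trans ht, by rw [mul_smul, map_smul_range_map]⟩

theorem mem_circles_and_infty_mem_iff {C : Set (OnePoint K)} :
    C ∈ circles F K ∧ ∞ ∈ C ↔ ∃ d b, C = projectiveLine (F := F) d b := by
  constructor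
  · rintro ⟨⟨g, rfl⟩, h_infty⟩
    obtain ⟨g', hg', hC⟩ := exists_smul_range_map_eq_of_infty_mem h_infty
    rw [OnePoint.smul_infty_eq_self_iff] at hg'
    have hslope : g' 0 0 / g' 1 1 ≠ 0 := by
      have := g'.det_ne_zero
      rw [Matrix.det_fin_two, hg', mul_zero, sub_zero] at this
      exact div_ne_zero (left_ne_zero_of_mul this) (right_ne_zero_of_mul this)
    exact ⟨_, _, hC.trans (smul_range_map_eq_projectiveLine hg' hslope)⟩
  · rintro ⟨d, b, rfl⟩
    refine ⟨?_, infty_mem_projectiveLine d b⟩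
    induction d using Projectivization.ind with | h a ha =>
    refine ⟨.mkOfDetNeZero !![a, b; 0, 1] (by simpa using ha), ?_⟩
    refine (smul_range_map_eq_projectiveLine ?_ ?_).trans ?_ <;>
      simp [Matrix.GeneralLinearGroup.mkOfDetNeZero, ha]

theorem isResolvedAt_circles_infty : IsResolvedAt (· ≠ ·) Set.univ (circles F K) ∞
    fun d : ℙ F K => Set.range (projectiveLine d) where
  adj_of_mem _ _ _ _ _ hy := hy
  existsUnique_block y z hy hz hyz := by
    obtain ⟨y, rfl⟩ := OnePoint.ne_infty_iff_exists.1 hy.symm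
    obtain ⟨z, rfl⟩ := OnePoint.ne_infty_iff_exists.1 hz.symm
    have hyz' : y ≠ z := ne_of_apply_ne _ hyz
    have hline := mem_circles_and_infty_mem_iff.2
      ⟨.mk F (z - y) (sub_ne_zero.2 hyz'.symm), y, rfl⟩
    refine ⟨_, ⟨hline.1, hline.2, by simp, by simp⟩, ?_⟩
    rintro C ⟨hC, h_infty, hyC, hzC⟩
    obtain ⟨d, b, rfl⟩ := mem_circles_and_infty_mem_iff.1 ⟨hC, h_infty⟩
    rw [projectiveLine_eq_of_mem hyC] at hzC ⊢
    rw [direction_eq_mk_sub hyz' hzC]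
  mem_of_mem_class := by
    rintro d _ ⟨b, rfl⟩
    exact ⟨trivial, mem_circles_and_infty_mem_iff.2 ⟨d, b, rfl⟩⟩
  existsUnique_color C hC h_infty := by
    obtain ⟨d, b, rfl⟩ := mem_circles_and_infty_mem_iff.1 ⟨hC, h_infty⟩
    exact ⟨d, ⟨b, rfl⟩, fun d' ⟨b', h⟩ => direction_eq_of_projectiveLine_eq h⟩
  existsUnique_mem_class d _ y hy := by
    obtain ⟨y, rfl⟩ := OnePoint.ne_infty_iff_exists.1 hy.symm
    refine ⟨projectiveLine d y, ⟨⟨y, rfl⟩, by simp⟩, ?_⟩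
    rintro _ ⟨⟨b, rfl⟩, hyb⟩
    exact projectiveLine_eq_of_mem hyb

theorem isResolvedDesign_circles [Finite F] :
    IsResolvedDesign (· ≠ ·) (Nat.card F + 1) (Set.univ : Set (ℙ F K)) (circles F K) := by
  refine isResolvedAt_circles_infty.isResolvedDesign_of_transitive
    (fun _ => ncard_of_mem_circles) fun x => ?_
  obtain ⟨g, hg⟩ := OnePoint.exists_mem_SL2 K x
  refine ⟨MulAction.toPerm (Matrix.SpecialLinearGroup.mapGL K g), hg,
    fun _ _ => (MulAction.toPerm _).injective.ne_iff.symm, ?_⟩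
  exact MulAction.smul_orbit _ _

end Circles

section Main

open scoped LinearAlgebra.Projectivization

theorem exists_isResolvedDesign_option_prod {F K γ : Type*} [Field F] [Field K] [Algebra F K]
    [Finite F] [Finite K] [Finite γ] [Finite V] [Finite W] (hγ : 2 ≤ Nat.card γ)
    {BV : Set (Set V)} (hV : Nat.card V = Nat.card F * Nat.card γ + 1)
    (hBV : IsResolvedDesign (· ≠ ·) (Nat.card γ + 1) (Set.univ : Set (Option ι)) BV)
    {BW : Set (Set (W × γ))} (hW : Nat.card W = Nat.card F + 1)
    (hBW : IsResolvedDesign (fun x y => x.1 ≠ y.1) (Nat.card γ + 1) (Set.univ : Set ι) BW) :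
    ∃ B : Set (Set (Option (K × γ))),
      IsResolvedDesign (· ≠ ·) (Nat.card γ + 1) (Set.univ : Set (Option (ℙ F K × ι))) B := by
  classical
  have : Nonempty V := (Nat.card_pos_iff.1 (hV ▸ Nat.succ_pos _)).1
  obtain ⟨𝒢, B₁, ⟨e⟩, hB₁⟩ := hBV.exists_isFiberDesign_univ (γ := γ)
  have card_𝒢 : Nat.card 𝒢 = Nat.card F := by
    have := Nat.card_congr e
    rw [Finite.card_option, Nat.card_prod, hV, Nat.add_right_cancel_iff] at this
    exact Nat.eq_of_mul_eq_mul_right (by omega) this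
  have exists_blocks (C : Set (Option K)) (hC : C ∈ circles F K) :
      ∃ B : Set (Set (Option (K × γ))), IsFiberDesign ι C (Nat.card γ + 1) B := by
    have ncard_eq := ncard_of_mem_circles hC
    by_cases h_none : none ∈ C
    · exact hB₁.exists_of_none_mem (ncard_eq.trans (by rw [card_𝒢])) h_none
    · exact hBW.isFiberDesign_range_some.exists_of_none_notMem (ncard_eq.trans hW.symm) h_none
  choose! B hB using exists_blocks
  -- `OnePoint K`, on which the circles live, unfolds to `Option K`.
  exact ⟨_, IsResolvedDesign.fiberBlocks (by omega) (isResolvedDesign_circles (F := F)) hB⟩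

theorem isResolvedDesign_singleton_univ (V : Type*) :
    IsResolvedDesign (· ≠ ·) (Nat.card V) (Set.univ : Set Unit) {(Set.univ : Set V)} where
  ncard_eq := by simp
  exists_isResolvedAt x := by
    refine ⟨fun _ => {Set.univ}, fun _ _ _ _ _ hy => hy, ?_, ?_, ?_, ?_⟩ <;> simp [ExistsUnique]

end Main

/-- For every nonnegative integer n, there exists an RDSQS(3·13^n + 1). -/
theorem stmt_8 (n : ℕ) : ExistsRDSQS (3 * 13 ^ n + 1) := by
  obtain rfl | hn := eq_or_ne n 0
  · simpa [ExistsRDSQS] using (isResolvedDesign_singleton_univ (Fin 4)).existsRDS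
  have : Fact (Nat.Prime 13) := ⟨by norm_num⟩
  obtain ⟨BV, hBV⟩ := exists_isResolvedDesign_ne_fin_forty
  obtain ⟨BW, hBW⟩ := exists_isResolvedDesign_fst_ne
  replace hBV : IsResolvedDesign (· ≠ ·) 4 (Set.univ : Set (Option (Fin 18))) BV := by
    simpa using hBV.image_colors (finSuccEquiv 18).injective
  obtain ⟨B, hB⟩ := exists_isResolvedDesign_option_prod (F := ZMod 13) (K := GaloisField 13 n)
    (γ := Fin 3) (V := Fin 40) (W := Fin 14) (by simp) (by simp) (by simpa using hBV) (by simp)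
    (by simpa using hBW)
  have card_eq : Nat.card (Option (GaloisField 13 n × Fin 3)) = 3 * 13 ^ n + 1 := by
    rw [Finite.card_option, Nat.card_prod, GaloisField.card 13 n hn, Nat.card_fin, mul_comm]
  rw [Nat.card_fin] at hB
  exact card_eq ▸ hB.existsRDS
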